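/- arXiv:1003.4564 — 5 statements merged into one kernel-verified Lean document; each statement's English description precedes it below -/
import Mathlib

section
/- For every n ≥ 1 there exists a bijection φ from the set A_n of alternating permutations of [n] onto the set T_n of 0-1-2 increasing trees on [n] such that for every π ∈ A_n the main-chain leaf of the image tree equals the first entry of π, i.e. p(φ(π)) = π₁. -/
/-!
The two sides are refined by the same recursion, and the bijection is built by induction.

*Permutations.* For a set `M` of labels and a cut `c`, let `U(M, c)` be the words on `M` of the form
`b < d > ⋯` whose first letter satisfies `b < c`; putting a letter `c ∉ M` in front of them gives the
alternating words that start with `c`. If `x ∈ M`, a word of `U(M, x + 1)` either lies in `U(M, x)`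
or starts with `x`, and then deleting `x` leaves a down-up word on `M \ {x}` which is empty or
starts above `x`.

*Trees.* An increasing 0-1-2 tree is drawn in the plane with the smaller child on the left, so that
the main chain is the left spine. A tree with main-chain leaf `c` is its leaf together with its left
spine, read upwards, each spine vertex carrying its right subtree; let `Z(M, c)` be the set of these
spines with labels `M` (leaf excluded). The lowest entry `(y, l)` of a spine in `Z(M, x + 1)` falls
under one of the following cases.
* `y ≠ x`: the spine lies in `Z(M, x)`, and its lowest right subtree does not have root `x`.
* `y = x`, the next entry is `(v, r)`, and the root of `l` is at most that of `r` (an empty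
  subtree counting as `⊤`): replacing the two entries by `(v, node x l r)` gives the elements of
  `Z(M, x)` whose lowest right subtree has root `x`.
* `y = x`, the next entry is `(v, r)`, and the root of `r` is smaller than that of `l`: delete `x`
  and give `v` the left subtree `r` and the right subtree `l`. This is a tree on `M \ {x}` with
  main-chain leaf above `x`, and `v` is recovered as the last vertex below `x` on its main chain.
* `y = x` is the only entry: `l` is a tree on `M \ {x}` whose root is above `x`, or is empty.

Hence `Z(M, x + 1) ≃ Z(M, x) ⊕ {trees on M \ {x} with leaf above x}` (`BT.zrec`), in parallel with
`BT.urec`. Sorting words by first letter and trees by main-chain leaf expresses the last summand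
through smaller label sets (`BT.exists_equiv_of_fiber`), and induction yields a bijection between
alternating words and plane trees on the same labels that carries the first letter to the main-chain
leaf (`BT.exists_equiv`). The remaining work identifies plane trees on `{0, …, n - 1}` with parent
functions (`BT.tree_equiv`) and alternating words with alternating permutations (`BT.perm_equiv`).
-/

/-- A permutation `π` of `Fin n` is (down-up) alternating:
`π₁ > π₂ < π₃ > π₄ < ⋯` (0-indexed: `π 0 > π 1 < π 2 > ⋯`). -/
def IsAltPerm (n : ℕ) (π : Equiv.Perm (Fin n)) : Prop :=
  ∀ i : ℕ, ∀ h : i + 1 < n,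
    if i % 2 = 0 then π ⟨i + 1, h⟩ < π ⟨i, Nat.lt_of_succ_lt h⟩
    else π ⟨i, Nat.lt_of_succ_lt h⟩ < π ⟨i + 1, h⟩

/-- The first entry of a permutation of `[n]`, as a 1-based value in `[n]`. -/
def firstEntry {n : ℕ} (π : Equiv.Perm (Fin n)) : ℕ :=
  if h : 0 < n then (π ⟨0, h⟩ : ℕ) + 1 else 0

/-- `f` encodes a 0-1-2 increasing tree on `[n]` (vertices `0,…,n-1` standing for
`1,…,n`): the root `0` is a fixed point of `f`, every non-root vertex has a strictly
smaller parent, and every vertex has at most two children. -/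
def IsIncTree (n : ℕ) (f : Fin n → Fin n) : Prop :=
  (∀ i : Fin n, (i : ℕ) = 0 → f i = i) ∧
  (∀ i : Fin n, (i : ℕ) ≠ 0 → (f i : ℕ) < (i : ℕ)) ∧
  (∀ j : Fin n,
    (Finset.univ.filter fun i : Fin n => (i : ℕ) ≠ 0 ∧ f i = j).card ≤ 2)

/-- One step along the main chain: move from `j` to its smallest child
(if `j` has any child), otherwise stay at `j`. -/
def mcStep (n : ℕ) (f : Fin n → Fin n) (j : Fin n) : Fin n :=
  let s := Finset.univ.filter fun i : Fin n => (i : ℕ) ≠ 0 ∧ f i = j ∧ j < i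
  if h : s.Nonempty then s.min' h else j

/-- The main-chain leaf `p(T)` of the increasing tree encoded by `f`, as a
1-based value in `[n]`: start at the root and repeatedly move to the smallest
child until reaching a leaf. -/
def mcLeafVal {n : ℕ} (f : Fin n → Fin n) : ℕ :=
  if h : 0 < n then (((mcStep n f)^[n]) ⟨0, h⟩ : ℕ) + 1 else 0


/-! ### Plane increasing trees and their left spines -/

/-- Plane binary trees with natural number labels, `nil` being the empty tree. A vertex with a single
child is meant to have it on the left. -/
inductive BT where
  | nil : BT
  | node (a : ℕ) (l r : BT) : BT

namespace BT

/-- The root label, with value `⊤` for the empty tree. -/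
def root : BT → ℕ∞
  | nil => ⊤
  | node a _ _ => (a : ℕ∞)

/-- The multiset of labels. -/
def labs : BT → Multiset ℕ
  | nil => 0
  | node a l r => a ::ₘ (labs l + labs r)

/-- The tree is increasing and its children are ordered: every label is smaller than those of its
children, and the left child has the smaller root. As the root of the empty tree is `⊤`, this forces
an only child to be on the left. When the labels are distinct, equality of the two roots means that
both subtrees are empty. -/
def Inc : BT → Prop
  | nil => True
  | node a l r => (a : ℕ∞) < root l ∧ root l ≤ root r ∧ Inc l ∧ Inc r

/-- The label at the bottom of the left spine, with value `⊤` for the empty tree. -/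
def leaf : BT → ℕ∞
  | nil => ⊤
  | node a l _ => if leaf l = ⊤ then (a : ℕ∞) else leaf l

/-- The multiset of labels of a spine. -/
def zlabs : List (ℕ × BT) → Multiset ℕ
  | [] => 0
  | (v, R) :: z => v ::ₘ (labs R + zlabs z)

/-- `ZB c z` says that `z`, a left spine read upwards whose entries are spine vertices with their
right subtrees, may be placed above a vertex labelled `c`. The label `c` itself need not be absent
from `z`: it is only used as a cut. -/
def ZB : ℕ → List (ℕ × BT) → Prop
  | _, [] => True
  | c, (v, R) :: z => v < c ∧ (c : ℕ∞) ≤ root R ∧ Inc R ∧ ZB v z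

/-- The tree obtained by placing `t` at the bottom of the spine. -/
def close : List (ℕ × BT) → BT → BT
  | [], t => t
  | (v, R) :: z, t => close z (node v t R)

/-- Descend the left spine of a tree for as long as the labels stay below `x`. The result is the
subtree at the last vertex reached and the part of the spine above it, added to `acc`. -/
def split (x : ℕ∞) : BT → List (ℕ × BT) → BT × List (ℕ × BT)
  | nil, acc => (nil, acc)
  | node a l r, acc => if root l < x then split x l ((a, r) :: acc) else (node a l r, acc)

theorem leaf_eq_top {t : BT} : leaf t = ⊤ ↔ t = nil := by
  cases t with
  | nil => simp [leaf]
  | node a l r =>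
    simp only [leaf]
    split_ifs with h <;> simp [h]

theorem root_eq_top {t : BT} : root t = ⊤ ↔ t = nil := by
  cases t <;> simp [root]

theorem mem_labs_of_root {t : BT} {a : ℕ} (h : root t = a) : a ∈ labs t := by
  cases t with
  | nil => simp [root] at h
  | node b l r =>
    simp only [root, Nat.cast_inj] at h
    simp [labs, h]

theorem labs_eq_zero {t : BT} : labs t = 0 ↔ t = nil := by
  cases t <;> simp [labs]

theorem labs_close (z : List (ℕ × BT)) (t : BT) : labs (close z t) = zlabs z + labs t := by
  induction z generalizing t with
  | nil => simp [close, zlabs]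
  | cons p z ih =>
    obtain ⟨v, R⟩ := p
    simp only [close, zlabs, ih, labs]
    rw [Multiset.add_cons, Multiset.cons_add]
    congr 1
    abel

theorem leaf_close (z : List (ℕ × BT)) {t : BT} (h : t ≠ nil) : leaf (close z t) = leaf t := by
  induction z generalizing t with
  | nil => rfl
  | cons p z ih =>
    obtain ⟨v, R⟩ := p
    rw [close, ih (by simp), leaf, if_neg (by simpa [leaf_eq_top] using h)]

theorem inc_close (z : List (ℕ × BT)) {t : BT} {c : ℕ} (h : root t = c) :
    Inc (close z t) ↔ ZB c z ∧ Inc t := by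
  induction z generalizing t c with
  | nil => simp [close, ZB]
  | cons p z ih =>
    obtain ⟨v, R⟩ := p
    rw [close, ih (c := v) rfl]
    simp only [ZB, Inc, h, Nat.cast_lt]
    tauto

theorem split_spec {x : ℕ∞} {t : BT} (acc : List (ℕ × BT)) (h : root t < x) :
    ∃ a l r z, split x t acc = (node a l r, z) ∧ close z (node a l r) = close acc t ∧
      (a : ℕ∞) < x ∧ x ≤ root l := by
  induction t generalizing acc with
  | nil => simp [root] at h
  | node a l r ihl ihr =>
    by_cases hl : root l < x
    · obtain ⟨b, l', r', z, h1, h2, h3⟩ := ihl ((a, r) :: acc) hl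
      exact ⟨b, l', r', z, by simp [split, hl, h1], by simpa [close] using h2, h3⟩
    · exact ⟨a, l, r, acc, by simp [split, hl], rfl, h, not_lt.1 hl⟩

theorem split_close {x : ℕ∞} {c : ℕ} {z : List (ℕ × BT)} (acc : List (ℕ × BT)) {t : BT}
    (hz : ZB c z) (hc : (c : ℕ∞) ≤ x) (ht : root t < x) :
    split x (close z t) acc = split x t (z ++ acc) := by
  induction z generalizing t c with
  | nil => rfl
  | cons p z ih =>
    obtain ⟨v, R⟩ := p
    have hv : (v : ℕ∞) < x := lt_of_lt_of_le (Nat.cast_lt.2 hz.1) hc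
    rw [close, ih hz.2.2.2 hv.le (by simpa [root] using hv)]
    simp [split, ht]

theorem root_close_lt {c x : ℕ} {z : List (ℕ × BT)} {t : BT}
    (hz : ZB c z) (hc : c < x) (ht : root t < x) : root (close z t) < x := by
  induction z generalizing t c with
  | nil => exact ht
  | cons p z ih =>
    obtain ⟨v, R⟩ := p
    have hv : v < x := hz.1.trans hc
    exact ih hz.2.2.2 hv (Nat.cast_lt.2 hv)

/-! ### The recursion for trees with given main-chain leaf -/

/-- The spines with label multiset `M` fitting above the cut `c`. -/
def ZSet (M : Multiset ℕ) (c : ℕ) : Set (List (ℕ × BT)) := {z | ZB c z ∧ zlabs z = M}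
/-- The ordered increasing trees with label multiset `M`. -/
def QSet (M : Multiset ℕ) : Set BT := {t | Inc t ∧ labs t = M}

/-- The map from `Z(M, x + 1)` to the disjoint union of `Z(M, x)` and the trees on `M \ {x}` with
leaf above `x`. -/
def H (x : ℕ) : List (ℕ × BT) → List (ℕ × BT) ⊕ BT
  | [] => .inl []
  | (y, l) :: z =>
    if y = x then
      match z with
      | [] => .inr l
      | (v, r) :: z => if root l ≤ root r then .inl ((v, node x l r) :: z)
          else .inr (close z (node v r l))
    else .inl ((y, l) :: z)

/-- The inverse of `H x` on its left summand. -/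
def Kl (x : ℕ) : List (ℕ × BT) → List (ℕ × BT)
  | (v, node y l r) :: z => if y = x then (x, l) :: (v, r) :: z else (v, node y l r) :: z
  | z => z

/-- The inverse of `H x` on its right summand: `x` is inserted below the last vertex of the left
spine that is smaller than `x`, or becomes the root if there is none. When `root t < x` the second
branch of the `match` is never reached. -/
def Kr (x : ℕ) (t : BT) : List (ℕ × BT) :=
  if root t < (x : ℕ∞) then
    match split x t [] with
    | (node a l r, z) => (x, r) :: (a, l) :: z
    | (nil, z) => z
  else [(x, t)]

theorem succ_le_iff (x : ℕ) (y : ℕ∞) : ((x + 1 : ℕ) : ℕ∞) ≤ y ↔ (x : ℕ∞) < y := by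
  cases y with
  | top => simp
  | coe a => simp only [Nat.cast_le, Nat.cast_lt]; omega

theorem root_le_leaf {t : BT} (h : Inc t) : root t ≤ leaf t := by
  induction t with
  | nil => simp [root, leaf]
  | node a l r ihl ihr =>
    rw [leaf]
    split_ifs with h'
    · exact le_rfl
    · exact h.1.le.trans (ihl h.2.2.1)

theorem root_ne {t : BT} {x : ℕ} (h : x ∉ labs t) : root t ≠ x := fun e => h (mem_labs_of_root e)

theorem H_maps {M : Multiset ℕ} (hM : M.Nodup) {x : ℕ} (hx : x ∈ M) {z : List (ℕ × BT)}
    (hz : z ∈ ZSet M (x + 1)) :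
    (∃ w ∈ ZSet M x, H x z = .inl w ∧ Kl x w = z) ∨
    (∃ t ∈ QSet (M.erase x), (x : ℕ∞) < leaf t ∧ H x z = .inr t ∧ Kr x t = z) := by
  obtain ⟨hz, rfl⟩ := hz
  rcases z with _ | ⟨⟨y, l⟩, z⟩
  · simp [zlabs] at hx
  obtain ⟨h1, h2, h3, h4⟩ := hz
  rw [succ_le_iff] at h2
  by_cases hy : y = x
  · subst hy
    rcases z with _ | ⟨⟨v, r⟩, z⟩
    · right
      refine ⟨l, ⟨h3, by simp [zlabs]⟩, ?_, by simp [H], ?_⟩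
      · exact h2.trans_le (root_le_leaf h3)
      · simp [Kr, h2.le]
    · obtain ⟨h5, h6, h7, h8⟩ := h4
      by_cases hlr : root l ≤ root r
      · left
        refine ⟨(v, node y l r) :: z, ⟨?_, ?_⟩, by simp [H, hlr], by simp [Kl]⟩
        · exact ⟨h5, le_rfl, ⟨h2, hlr, h3, h7⟩, h8⟩
        · simp only [zlabs, labs]
          simp only [← Multiset.singleton_add]; abel
      · right
        have hr : r ≠ nil := by rintro rfl; simp [root] at hlr
        have hyr : (y : ℕ∞) < root r := by
          refine lt_of_le_of_ne h6 (Ne.symm (root_ne fun h => ?_))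
          simp only [zlabs] at hM
          exact (Multiset.nodup_cons.1 hM).1 (by simp [h])
        have hvy : (v : ℕ∞) < y := Nat.cast_lt.2 h5
        refine ⟨close z (node v r l), ⟨?_, ?_⟩, ?_, by simp [H, hlr], ?_⟩
        · rw [inc_close (c := v) _ rfl]
          refine ⟨h8, lt_of_lt_of_le (Nat.cast_lt.2 h5) h6, (not_le.1 hlr).le, h7, h3⟩
        · simp only [zlabs, labs, labs_close, Multiset.erase_cons_head]
          simp only [← Multiset.singleton_add]; abel
        · rw [leaf_close _ (by simp), leaf, if_neg (by simpa [leaf_eq_top] using hr)]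
          exact hyr.trans_le (root_le_leaf h7)
        · have e : split y (close z (node v r l)) [] = (node v r l, z) := by
            rw [split_close (x := y) (t := node v r l) [] h8 hvy.le hvy]
            simp [split, h6]
          have : root (close z (node v r l)) < y := root_close_lt h8 h5 hvy
          simp [Kr, this, e]
  · left
    have : y < x := by omega
    refine ⟨_, (⟨⟨this, h2.le, h3, h4⟩, rfl⟩ : (y, l) :: z ∈ ZSet _ x), by simp [H, hy], ?_⟩
    rcases l with _ | ⟨b, l, r⟩
    · rfl
    · have : b ≠ x := by rintro rfl; simp [root] at h2
      simp [Kl, this]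

theorem Kl_maps {M : Multiset ℕ} (hM : M.Nodup) {x : ℕ} {w : List (ℕ × BT)}
    (hw : w ∈ ZSet M x) : Kl x w ∈ ZSet M (x + 1) ∧ H x (Kl x w) = .inl w := by
  obtain ⟨hw, rfl⟩ := hw
  rcases w with _ | ⟨⟨v, R⟩, z⟩
  · simp [Kl, ZSet, ZB, H]
  obtain ⟨h1, h2, h3, h4⟩ := hw
  rcases R with _ | ⟨y, l, r⟩
  · simp only [Kl, ZSet, ZB, H, root, Set.mem_ofPred_eq]
    simp; refine ⟨⟨by omega, h3, h4⟩, by omega⟩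
  simp only [root, Nat.cast_le] at h2
  by_cases hy : y = x
  · subst hy
    obtain ⟨g1, g2, g3, g4⟩ := h3
    simp only [Kl, if_true, H]
    refine ⟨⟨⟨by omega, by rwa [succ_le_iff], g3, h1, ?_, g4, h4⟩, ?_⟩, by simp [g2]⟩
    · exact g1.le.trans g2
    · simp only [zlabs, labs]
      simp only [← Multiset.singleton_add]; abel
  · simp only [Kl, if_neg hy, H]
    refine ⟨⟨⟨by omega, ?_, h3, h4⟩, rfl⟩, by rw [if_neg (by omega)]⟩
    simp only [root, Nat.cast_le]; omega

theorem Kr_maps {M : Multiset ℕ} (hM : M.Nodup) {x : ℕ} (hx : x ∈ M) {t : BT}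
    (ht : t ∈ QSet (M.erase x)) (htx : (x : ℕ∞) < leaf t) :
    Kr x t ∈ ZSet M (x + 1) ∧ H x (Kr x t) = .inr t := by
  obtain ⟨ht, hl⟩ := ht
  have hxt : root t ≠ x := root_ne (by rw [hl]; exact hM.notMem_erase)
  by_cases hr : root t < (x : ℕ∞)
  · obtain ⟨a, l, r, z, h1, h2, h3, h4⟩ := split_spec [] hr
    simp only [close] at h2
    subst h2
    rw [inc_close (c := a) _ rfl] at ht
    obtain ⟨h5, h6, h7, h8, h9⟩ := ht
    rw [leaf_close _ (by simp), leaf] at htx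
    simp only [Kr, if_pos hr, h1]
    have hnd : (labs (close z (node a l r))).Nodup := hl ▸ hM.erase x
    have hlne : root l ≠ ⊤ := by
      rw [ne_eq, root_eq_top, ← leaf_eq_top]; intro h
      rw [if_pos h] at htx; exact absurd htx (not_lt.2 h3.le)
    -- the inequality is strict because the labels are distinct
    have hlt : root l < root r := by
      refine lt_of_le_of_ne h7 fun e => ?_
      obtain ⟨b, hb⟩ := ENat.ne_top_iff_exists.1 hlne
      have m1 := mem_labs_of_root hb.symm
      have m2 := mem_labs_of_root (e ▸ hb.symm)
      rw [labs_close, labs] at hnd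
      have := (Multiset.nodup_cons.1 (Multiset.nodup_add.1 hnd).2.1).2
      exact Multiset.disjoint_left.1 (Multiset.nodup_add.1 this).2.2 m1 m2
    refine ⟨⟨⟨by omega, ?_, h9, Nat.cast_lt.1 h3, h4, h8, h5⟩, ?_⟩, ?_⟩
    · rw [succ_le_iff]; exact h4.trans_lt hlt
    · rw [← Multiset.cons_erase hx, ← hl]
      simp only [zlabs, labs, labs_close]
      simp only [← Multiset.singleton_add]; abel
    · simp [H, hlt]
  · simp only [Kr, if_neg hr, H]
    refine ⟨⟨⟨by omega, ?_, ht, trivial⟩, ?_⟩, by simp⟩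
    · rw [succ_le_iff]; exact lt_of_le_of_ne (not_lt.1 hr) hxt.symm
    · simp [zlabs, hl, hx]


theorem zrec {M : Multiset ℕ} (hM : M.Nodup) {x : ℕ} (hx : x ∈ M) :
    Nonempty (ZSet M x ⊕ {t : QSet (M.erase x) // (x : ℕ∞) < leaf t.1} ≃ ZSet M (x + 1)) := by
  refine ⟨Equiv.ofBijective (Sum.elim (fun w => ⟨Kl x w.1, (Kl_maps hM w.2).1⟩)
    (fun t => ⟨Kr x t.1.1, (Kr_maps hM hx t.1.2 t.2).1⟩)) ⟨?_, ?_⟩⟩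
  · apply Function.Injective.sumElim
    · intro w w' h
      have h' : Kl x w.1 = Kl x w'.1 := congrArg Subtype.val h
      have := (Kl_maps hM w.2).2
      rw [h', (Kl_maps hM w'.2).2] at this
      exact Subtype.ext (Sum.inl.inj this).symm
    · intro t t' h
      have h' : Kr x t.1.1 = Kr x t'.1.1 := congrArg Subtype.val h
      have := (Kr_maps hM hx t.1.2 t.2).2
      rw [h', (Kr_maps hM hx t'.1.2 t'.2).2] at this
      exact Subtype.ext (Subtype.ext (Sum.inr.inj this).symm)
    · intro w t h
      have h' : Kl x w.1 = Kr x t.1.1 := congrArg Subtype.val h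
      have := (Kl_maps hM w.2).2
      rw [h', (Kr_maps hM hx t.1.2 t.2).2] at this
      simp at this
  · rintro ⟨z, hz⟩
    rcases H_maps hM hx hz with ⟨w, hw, -, h⟩ | ⟨t, ht, htx, -, h⟩
    · exact ⟨.inl ⟨w, hw⟩, Subtype.ext h⟩
    · exact ⟨.inr ⟨⟨t, ht⟩, htx⟩, Subtype.ext h⟩

/-- When `x` is not a label, the cuts `x` and `x + 1` are equivalent. -/
theorem zset_succ {M : Multiset ℕ} {x : ℕ} (hx : x ∉ M) : ZSet M (x + 1) = ZSet M x := by
  ext z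
  refine and_congr_left fun hz => ?_
  subst hz
  rcases z with _ | ⟨⟨v, R⟩, z⟩
  · simp [ZB]
  · simp only [zlabs, Multiset.mem_cons, Multiset.mem_add, not_or] at hx
    simp only [ZB, succ_le_iff]
    have : (x : ℕ∞) < root R ↔ (x : ℕ∞) ≤ root R :=
      ⟨le_of_lt, fun h => lt_of_le_of_ne h (root_ne hx.2.1).symm⟩
    rw [this]
    have : v < x + 1 ↔ v < x := by omega
    rw [this]

theorem zset_zero (M : Multiset ℕ) : ZSet M 0 = {z | z = [] ∧ M = 0} := by
  ext z
  rcases z with _ | ⟨⟨v, R⟩, z⟩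
  · simp [ZSet, ZB, zlabs, eq_comm]
  · simp [ZSet, ZB]

/-! ### The recursion for alternating words with given first letter -/

/-- `AB c l` says that `c > b < d > ⋯` where `l = b, d, …`. -/
def AB : ℕ → List ℕ → Prop
  | _, [] => True
  | c, [b] => b < c
  | c, b :: d :: m => b < c ∧ b < d ∧ AB d m

/-- Down-up alternating words. -/
def Alt : List ℕ → Prop
  | [] => True
  | d :: m => AB d m

/-- The first letter of a word, with value `⊤` for the empty word. -/
def hd : List ℕ → ℕ∞
  | [] => ⊤
  | d :: _ => d

/-- The words with letters `M` that remain alternating behind the cut `c`. -/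
def USet (M : Multiset ℕ) (c : ℕ) : Set (List ℕ) := {l | AB c l ∧ (l : Multiset ℕ) = M}
/-- The down-up alternating words with letters `M`. -/
def ASet (M : Multiset ℕ) : Set (List ℕ) := {l | Alt l ∧ (l : Multiset ℕ) = M}

theorem AB_cons (c b : ℕ) (m : List ℕ) : AB c (b :: m) ↔ b < c ∧ (b : ℕ∞) < hd m ∧ Alt m := by
  rcases m with _ | ⟨d, m⟩ <;> simp [AB, hd, Alt]

theorem urec {M : Multiset ℕ} {x : ℕ} (hx : x ∈ M) :
    Nonempty (USet M x ⊕ {t : ASet (M.erase x) // (x : ℕ∞) < hd t.1} ≃ USet M (x + 1)) := by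
  have mono : ∀ l, AB x l → AB (x + 1) l := by
    rintro (_ | ⟨b, m⟩) h
    · trivial
    · rw [AB_cons] at h ⊢; exact ⟨by omega, h.2⟩
  refine ⟨Equiv.ofBijective (Sum.elim (fun w => ⟨w.1, mono _ w.2.1, w.2.2⟩)
    (fun t => ⟨x :: t.1.1, ?_, ?_⟩)) ⟨?_, ?_⟩⟩
  · rw [AB_cons]; exact ⟨by omega, t.2, t.1.2.1⟩
  · rw [← Multiset.cons_coe, t.1.2.2, Multiset.cons_erase hx]
  · apply Function.Injective.sumElim
    · intro w w' h
      have h' := congrArg Subtype.val h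
      exact Subtype.ext h'
    · intro w w' h
      have h' : x :: w.1.1 = x :: w'.1.1 := congrArg Subtype.val h
      exact Subtype.ext (Subtype.ext (List.cons.inj h').2)
    · rintro ⟨w, hw, hw'⟩ t h
      have h' : w = x :: t.1.1 := congrArg Subtype.val h
      rw [h', AB_cons] at hw
      exact lt_irrefl _ hw.1
  · rintro ⟨_ | ⟨b, m⟩, hl, hM⟩
    · exact ⟨.inl ⟨[], trivial, hM⟩, rfl⟩
    · rw [AB_cons] at hl
      by_cases hb : b = x
      · subst hb
        refine ⟨.inr ⟨⟨m, hl.2.2, ?_⟩, hl.2.1⟩, rfl⟩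
        rw [← hM]; simp
      · exact ⟨.inl ⟨b :: m, by rw [AB_cons]; exact ⟨by omega, hl.2⟩, hM⟩, rfl⟩

theorem uset_succ {M : Multiset ℕ} {x : ℕ} (hx : x ∉ M) : USet M (x + 1) = USet M x := by
  ext z
  refine and_congr_left fun hz => ?_
  subst hz
  rcases z with _ | ⟨v, z⟩
  · simp [AB]
  · rw [AB_cons, AB_cons]
    simp at hx
    have : v < x + 1 ↔ v < x := by omega
    rw [this]

theorem uset_zero (M : Multiset ℕ) : USet M 0 = {z | z = [] ∧ M = 0} := by
  ext z
  rcases z with _ | ⟨v, z⟩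
  · simp [USet, AB, eq_comm]
  · simp [USet, AB_cons]

/-! ### The bijection between words and plane trees -/

theorem fiber_top (M : Multiset ℕ) :
    Nonempty ({m : ASet M // hd m.1 = ⊤} ≃ {t : QSet M // leaf t.1 = ⊤}) := by
  have hA : ∀ m, hd m = ⊤ → m = [] := by rintro (_ | ⟨a, m⟩) <;> simp [hd]
  by_cases hM : M = 0
  · subst hM
    refine ⟨⟨fun _ => ⟨⟨nil, trivial, rfl⟩, rfl⟩, fun _ => ⟨⟨[], trivial, rfl⟩, rfl⟩, ?_, ?_⟩⟩
    · intro m; exact Subtype.ext (Subtype.ext (hA _ m.2).symm)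
    · intro t; exact Subtype.ext (Subtype.ext (leaf_eq_top.1 t.2).symm)
  · have : IsEmpty {m : ASet M // hd m.1 = ⊤} := ⟨fun m => hM (by
      rw [← m.1.2.2, hA _ m.2]; rfl)⟩
    have : IsEmpty {t : QSet M // leaf t.1 = ⊤} := ⟨fun m => hM (by
      rw [← m.1.2.2, leaf_eq_top.1 m.2]; rfl)⟩
    exact ⟨Equiv.equivOfIsEmpty _ _⟩

/-- A spine and the tree below it are determined by the whole tree, up to moving further down the
left spine. -/
theorem close_injective {c c' : ℕ} {z z' : List (ℕ × BT)} {t t' : BT} (hz : ZB c z) (hz' : ZB c' z')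
    (ht : root t ≠ ⊤) (ht' : root t' ≠ ⊤) (h : close z t = close z' t') :
    split ⊤ t z = split ⊤ t' z' := by
  have e := split_close (x := ⊤) [] hz le_top (lt_top_iff_ne_top.2 ht)
  rw [h, split_close (x := ⊤) [] hz' le_top (lt_top_iff_ne_top.2 ht')] at e
  simpa using e.symm

theorem exists_close {t : BT} (ht : Inc t) {d : ℕ} (hd : leaf t = d) :
    ∃ z, ZB d z ∧ close z (node d nil nil) = t := by
  have hne : root t < ⊤ := by
    rw [lt_top_iff_ne_top, ne_eq, root_eq_top]; rintro rfl; simp [leaf] at hd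
  obtain ⟨a, l, r, z, h1, h2, h3, h4⟩ := split_spec [] hne
  simp only [close] at h2
  subst h2
  rw [inc_close (c := a) _ rfl] at ht
  rw [top_le_iff, root_eq_top] at h4
  subst h4
  have : root r = ⊤ := top_le_iff.1 ht.2.2.1
  rw [root_eq_top] at this
  subst this
  rw [leaf_close _ (by simp)] at hd
  have : a = d := by simpa [leaf] using hd
  subst this
  exact ⟨z, ht.1, rfl⟩

/-- Words starting with `d` and trees with main-chain leaf `d` correspond if the words behind `d` and
the spines above `d` do. -/
theorem fiber_coe (M : Multiset ℕ) (d : ℕ)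
    (ih : d ∈ M → Nonempty (USet (M.erase d) d ≃ ZSet (M.erase d) d)) :
    Nonempty ({m : ASet M // hd m.1 = d} ≃ {t : QSet M // leaf t.1 = d}) := by
  by_cases hd' : d ∈ M
  · obtain ⟨e⟩ := ih hd'
    have e1 : Nonempty (USet (M.erase d) d ≃ {m : ASet M // hd m.1 = d}) := by
      refine ⟨Equiv.ofBijective (fun l => ⟨⟨d :: l.1, l.2.1, ?_⟩, rfl⟩) ⟨?_, ?_⟩⟩
      · rw [← Multiset.cons_coe, l.2.2, Multiset.cons_erase hd']
      · intro l l' h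
        have h' : d :: l.1 = d :: l'.1 := congrArg (fun u => u.1.1) h
        exact Subtype.ext (List.cons.inj h').2
      · rintro ⟨⟨_ | ⟨b, m⟩, hm, hM⟩, h⟩
        · simp [hd] at h
        · have : b = d := by simpa [hd] using h
          subst this
          exact ⟨⟨m, hm, by rw [← hM]; simp⟩, rfl⟩
    have e2 : Nonempty (ZSet (M.erase d) d ≃ {t : QSet M // leaf t.1 = d}) := by
      refine ⟨Equiv.ofBijective (fun z => ⟨⟨close z.1 (node d nil nil), ?_, ?_⟩, ?_⟩) ⟨?_, ?_⟩⟩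
      · rw [inc_close (c := d) _ rfl]
        exact ⟨z.2.1, by simp [Inc, root]⟩
      · rw [labs_close, z.2.2]
        simp only [labs, add_zero]
        rw [add_comm, Multiset.cons_add, zero_add, Multiset.cons_erase hd']
      · rw [leaf_close _ (by simp)]; simp [leaf]
      · intro z z' h
        have h' : close z.1 (node d nil nil) = close z'.1 (node d nil nil) :=
          congrArg (fun u => u.1.1) h
        have := close_injective z.2.1 z'.2.1 (by simp [root]) (by simp [root]) h'
        exact Subtype.ext (by simpa [split, root] using this)
      · rintro ⟨⟨t, ht, hM⟩, h⟩
        obtain ⟨z, hz, rfl⟩ := exists_close ht h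
        refine ⟨⟨z, hz, ?_⟩, rfl⟩
        rw [← hM, labs_close]
        simp only [labs, add_zero]
        rw [add_comm, Multiset.cons_add, zero_add, Multiset.erase_cons_head]
    exact ⟨e1.some.symm.trans (e.trans e2.some)⟩
  · have : IsEmpty {m : ASet M // hd m.1 = d} := by
      refine ⟨fun ⟨⟨m, hm, hM⟩, h⟩ => hd' ?_⟩
      rcases m with _ | ⟨b, m⟩
      · simp [hd] at h
      · have : b = d := by simpa [hd] using h
        rw [← hM, this]; simp
    have : IsEmpty {t : QSet M // leaf t.1 = d} := by
      refine ⟨fun ⟨⟨t, ht, hM⟩, h⟩ => hd' ?_⟩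
      obtain ⟨z, hz, rfl⟩ := exists_close ht h
      rw [← hM, labs_close]; simp [labs]
    exact ⟨Equiv.equivOfIsEmpty _ _⟩

theorem exists_equiv_of_fiber (M : Multiset ℕ)
    (ih : ∀ d ∈ M, Nonempty (USet (M.erase d) d ≃ ZSet (M.erase d) d)) :
    ∃ e : ASet M ≃ QSet M, ∀ m, leaf (e m).1 = hd m.1 := by
  have key : ∀ y : ℕ∞, Nonempty ({m : ASet M // hd m.1 = y} ≃ {t : QSet M // leaf t.1 = y}) := by
    intro y
    induction y using ENat.recTopCoe with
    | top => exact fiber_top M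
    | coe d => exact fiber_coe M d (ih d)
  have e := fun y => (key y).some
  -- glue the bijections between the fibres over the first letter and over the main-chain leaf
  refine ⟨(Equiv.sigmaFiberEquiv (fun m : ASet M => hd m.1)).symm.trans
    ((Equiv.sigmaCongrRight e).trans (Equiv.sigmaFiberEquiv (fun t : QSet M => leaf t.1))), ?_⟩
  intro m
  exact (e (hd m.1) ⟨m, rfl⟩).2

theorem uset_equiv_zset (n : ℕ) : ∀ M : Multiset ℕ, M.Nodup → M.card = n → ∀ c,
    Nonempty (USet M c ≃ ZSet M c) := by
  induction n using Nat.strong_induction_on with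
  | _ n ih =>
    intro M hM hn c
    induction c with
    | zero =>
      rw [uset_zero, zset_zero]
      refine ⟨⟨fun z => ⟨[], rfl, z.2.2⟩, fun z => ⟨[], rfl, z.2.2⟩, ?_, ?_⟩⟩
      · intro z; exact Subtype.ext z.2.1.symm
      · intro z; exact Subtype.ext z.2.1.symm
    | succ x ihx =>
      by_cases hx : x ∈ M
      · obtain ⟨e, he⟩ := exists_equiv_of_fiber (M.erase x) (fun d hd => by
          have h1 := Multiset.card_erase_lt_of_mem hx
          have h2 := Multiset.card_erase_lt_of_mem hd
          exact ih _ (by omega) _ ((hM.erase x).erase d) rfl d)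
        obtain ⟨f⟩ := ihx
        obtain ⟨u⟩ := urec hx
        obtain ⟨z⟩ := zrec hM hx
        exact ⟨u.symm.trans ((Equiv.sumCongr f
          (e.subtypeEquiv (fun m => by rw [he m]))).trans z)⟩
      · rw [uset_succ hx, zset_succ hx]; exact ihx

theorem exists_equiv (M : Multiset ℕ) (hM : M.Nodup) :
    ∃ e : ASet M ≃ QSet M, ∀ m, leaf (e m).1 = hd m.1 :=
  exists_equiv_of_fiber M fun d _ => uset_equiv_zset _ _ (hM.erase d) rfl d


/-! ### Plane trees and parent functions -/

/-- The plane tree represents the child relation `C` (`C a c`: `c` is a child of `a`): at every vertex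
of the tree the two subtrees are rooted at exactly the children of that vertex. The second clause
excludes that the same child is used on both sides. -/
def Rep (C : ℕ → ℕ → Prop) : BT → Prop
  | nil => True
  | node a l r => (∀ c : ℕ, C a c ↔ root l = c ∨ root r = c) ∧
      (root l = root r → root r = ⊤) ∧ Rep C l ∧ Rep C r

/-- The child relation of a parent function, on natural numbers: `c` is a non-root vertex with
parent `a`. -/
def CH {n : ℕ} (f : Fin n → Fin n) (a c : ℕ) : Prop :=
  ∃ h : c < n, c ≠ 0 ∧ (f ⟨c, h⟩ : ℕ) = a

theorem root_le {t : BT} (ht : Inc t) {x : ℕ} (hx : x ∈ labs t) : root t ≤ x := by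
  induction t with
  | nil => simp [labs] at hx
  | node a l r ihl ihr =>
    obtain ⟨h1, h2, h3, h4⟩ := ht
    simp only [labs, Multiset.mem_cons, Multiset.mem_add] at hx
    rcases hx with rfl | hx | hx
    · exact le_rfl
    · exact h1.le.trans (ihl h3 hx)
    · exact (h1.le.trans h2).trans (ihr h4 hx)

/-- A vertex occurs as often as its parent, unless it is the root of the tree. By induction along the
vertices this shows that every vertex occurs exactly once. -/
theorem count_rep {C : ℕ → ℕ → Prop} (hC : ∀ a b x, C a x → C b x → a = b) {t : BT} (ht : Inc t)
    (hr : Rep C t) {x y : ℕ} (hxy : C y x) :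
    (labs t).count x = (labs t).count y + if root t = x then 1 else 0 := by
  induction t with
  | nil => simp [labs, root]
  | node a l r ihl ihr =>
    obtain ⟨-, -, h3, h4⟩ := ht
    obtain ⟨g1, g2, g3, g4⟩ := hr
    have hroot : root (node a l r) = a := rfl
    simp only [labs, Multiset.count_cons, Multiset.count_add, ihl h3 g3, ihr h4 g4, hroot,
      Nat.cast_inj]
    have key : ((if root l = x then 1 else 0) + if root r = x then 1 else 0) =
        if y = a then 1 else 0 := by
      by_cases hy : y = a
      · subst hy
        rcases (g1 x).1 hxy with h | h
        · have : root r ≠ x := fun h' => by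
            have := g2 (h.trans h'.symm); simp [h'] at this
          simp [h, this]
        · have : root l ≠ x := fun h' => by
            have := g2 (h'.trans h.symm); simp [h] at this
          simp [h, this]
      · have : ¬ C a x := fun h => hy (hC _ _ _ hxy h)
        rw [g1] at this
        push Not at this
        simp [this, hy]
    have : (if x = a then 1 else 0) = if a = x then 1 else 0 := by simp only [eq_comm]
    omega

theorem labs_eq_range {n : ℕ} {f : Fin n → Fin n} (hf : IsIncTree n f) {t : BT} (ht : Inc t)
    (hr : Rep (CH f) t) (h0 : root t = (0 : ℕ)) (hlt : ∀ x ∈ labs t, x < n) :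
    labs t = Multiset.range n := by
  have h1 : ∀ x, x < n → (labs t).count x = 1 := by
    intro x
    induction x using Nat.strong_induction_on with
    | _ x ih =>
      intro hx
      by_cases hx0 : x = 0
      · subst hx0
        cases t with
        | nil => simp [root] at h0
        | node a l r =>
          have : a = 0 := by simpa [root] using h0
          subst this
          obtain ⟨g1, g2, g3, g4⟩ := ht
          have hl : 0 ∉ labs l := fun h => absurd g1 (not_lt.2 (root_le g3 h))
          have hr : 0 ∉ labs r := fun h => absurd (g1.trans_le g2) (not_lt.2 (root_le g4 h))
          simp [labs, Multiset.count_eq_zero.2 hl, Multiset.count_eq_zero.2 hr]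
      · have hlt := hf.2.1 ⟨x, hx⟩ hx0
        rw [count_rep (C := CH f) (y := f ⟨x, hx⟩) _ ht hr ⟨hx, hx0, rfl⟩,
          ih _ hlt (Fin.is_lt _), h0]
        · have : ((0 : ℕ) : ℕ∞) ≠ x := by rw [ne_eq, Nat.cast_inj]; omega
          simp only [this, if_false]
        · rintro a b x ⟨h, -, rfl⟩ ⟨h', -, rfl⟩; rfl
  ext x
  by_cases hx : x < n
  · rw [h1 x hx, Multiset.count_eq_one_of_mem (Multiset.nodup_range n) (Multiset.mem_range.2 hx)]
  · rw [Multiset.count_eq_zero.2 fun h => hx (hlt x h),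
      Multiset.count_eq_zero.2 fun h => hx (Multiset.mem_range.1 h)]

/-- Every vertex `v` carries a plane tree, by descending induction on `v`. -/
theorem exists_rep {n : ℕ} {f : Fin n → Fin n} (hf : IsIncTree n f) :
    ∀ k v : ℕ, v < n → n - v = k →
      ∃ t, root t = v ∧ Inc t ∧ Rep (CH f) t ∧ ∀ x ∈ labs t, x < n := by
  intro k
  induction k using Nat.strong_induction_on with
  | _ k ih =>
    intro v hv hk
    have hch : ∀ c, CH f v c → v < c ∧ c < n := by
      rintro c ⟨h, h0, h1⟩
      have := hf.2.1 ⟨c, h⟩ h0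
      simp only [h1] at this
      exact ⟨this, h⟩
    have sub : ∀ c, CH f v c → ∃ t, root t = c ∧ Inc t ∧ Rep (CH f) t ∧ ∀ x ∈ labs t, x < n :=
      fun c hc => ih (n - c) (by have := hch c hc; omega) c (hch c hc).2 rfl
    -- the children of `v`, sorted
    have hcard := hf.2.2 ⟨v, hv⟩
    set s := Finset.univ.filter fun i : Fin n => (i : ℕ) ≠ 0 ∧ f i = ⟨v, hv⟩ with hs
    have hmem : ∀ c, CH f v c ↔ ∃ i ∈ s, (i : ℕ) = c := by
      intro c
      simp only [hs, Finset.mem_filter, Finset.mem_univ, true_and, CH]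
      constructor
      · rintro ⟨h, h0, h1⟩; exact ⟨⟨c, h⟩, ⟨h0, Fin.ext h1⟩, rfl⟩
      · rintro ⟨i, ⟨h0, h1⟩, rfl⟩; exact ⟨i.2, h0, by rw [Fin.eta, h1]⟩
    have hcases : (s = ∅) ∨ (∃ i, s = {i}) ∨ ∃ i j, i < j ∧ s = {i, j} := by
      have : s.card = 0 ∨ s.card = 1 ∨ s.card = 2 := by omega
      rcases this with h | h | h
      · exact .inl (Finset.card_eq_zero.1 h)
      · exact .inr (.inl (Finset.card_eq_one.1 h))
      · obtain ⟨i, j, hij, h⟩ := Finset.card_eq_two.1 h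
        rcases lt_or_gt_of_ne hij with h' | h'
        · exact .inr (.inr ⟨i, j, h', h⟩)
        · exact .inr (.inr ⟨j, i, h', by rw [h, Finset.pair_comm]⟩)
    rcases hcases with h | ⟨i, h⟩ | ⟨i, j, hij, h⟩
    · refine ⟨node v nil nil, rfl, by simp [Inc, root], ⟨fun c => ?_, by simp [root], trivial, trivial⟩, ?_⟩
      · rw [hmem, h]; simp [root]
      · simpa [labs] using hv
    · have hi : CH f v i := (hmem _).2 ⟨i, by simp [h], rfl⟩
      obtain ⟨t, h1, h2, h3, h4⟩ := sub i hi
      refine ⟨node v t nil, rfl, ⟨?_, by simp [root], h2, trivial⟩,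
        ⟨fun c => ?_, by simp [root], h3, trivial⟩, ?_⟩
      · rw [h1, Nat.cast_lt]; exact (hch _ hi).1
      · rw [hmem, h, h1]; simp [root]
      · simp only [labs, Multiset.mem_cons, add_zero]
        rintro x (rfl | hx)
        exacts [hv, h4 x hx]
    · have hi : CH f v i := (hmem _).2 ⟨i, by simp [h], rfl⟩
      have hj : CH f v j := (hmem _).2 ⟨j, by simp [h], rfl⟩
      obtain ⟨t, h1, h2, h3, h4⟩ := sub i hi
      obtain ⟨u, k1, k2, k3, k4⟩ := sub j hj
      have hij' : root t < root u := by rw [h1, k1, Nat.cast_lt]; exact hij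
      refine ⟨node v t u, rfl, ⟨?_, hij'.le, h2, k2⟩,
        ⟨fun c => ?_, fun e => absurd e hij'.ne, h3, k3⟩, ?_⟩
      · rw [h1, Nat.cast_lt]; exact (hch _ hi).1
      · rw [hmem, h, h1, k1]; simp
      · simp only [labs, Multiset.mem_cons, Multiset.mem_add]
        rintro x (rfl | hx | hx)
        exacts [hv, h4 x hx, k4 x hx]

/-- A pair in `ℕ∞` sorted increasingly, with distinct entries unless both are `⊤`, is determined by
the set of its finite entries. -/
theorem pair_unique {p q p' q' : ℕ∞} (h1 : p ≤ q) (h1' : p' ≤ q') (h2 : p = q → q = ⊤)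
    (h2' : p' = q' → q' = ⊤) (h : ∀ c : ℕ, (p = c ∨ q = c) ↔ (p' = c ∨ q' = c)) :
    p = p' ∧ q = q' := by
  have aux : ∀ {p q p' q' : ℕ∞}, p' ≤ q' → (∀ c : ℕ, (p = c ∨ q = c) ↔ (p' = c ∨ q' = c)) →
      p' ≤ p := by
    intro p q p' q' h1' h
    induction p using ENat.recTopCoe with
    | top => exact le_top
    | coe a =>
      rcases (h a).1 (.inl rfl) with h | h
      · exact h.le
      · exact h ▸ h1'
  have hp : p = p' := le_antisymm (aux h1 fun c => (h c).symm) (aux h1' h)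
  subst hp
  refine ⟨rfl, ?_⟩
  have aux2 : ∀ {p q q' : ℕ∞}, (p = q → q = ⊤) → (∀ c : ℕ, (p = c ∨ q = c) ↔ (p = c ∨ q' = c)) →
      q' ≤ q := by
    intro p q q' h2 h
    induction q using ENat.recTopCoe with
    | top => exact le_top
    | coe a =>
      rcases (h a).1 (.inr rfl) with h | h
      · exact absurd (h2 h) (by simp)
      · exact h.le
  exact le_antisymm (aux2 h2' fun c => (h c).symm) (aux2 h2 h)

theorem rep_unique {C : ℕ → ℕ → Prop} {t u : BT} (ht : Inc t) (hu : Inc u) (rt : Rep C t)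
    (ru : Rep C u) (h : root t = root u) : t = u := by
  induction t generalizing u with
  | nil => exact (root_eq_top.1 (h.symm.trans rfl)).symm
  | node a l r ihl ihr =>
    cases u with
    | nil => simp [root] at h
    | node b l' r' =>
      have : a = b := by simpa [root] using h
      subst this
      obtain ⟨-, h2, h3, h4⟩ := ht
      obtain ⟨-, k2, k3, k4⟩ := hu
      obtain ⟨e1, e2⟩ := pair_unique h2 k2 rt.2.1 ru.2.1 fun c => (rt.1 c).symm.trans (ru.1 c)
      rw [ihl h3 k3 rt.2.2.1 ru.2.2.1 e1, ihr h4 k4 rt.2.2.2 ru.2.2.2 e2]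

/-- The children of a vertex `a` of `t` can be read off `t`: they are the same for all relations
represented by `t`, and there are at most two of them. -/
theorem rep_children {t : BT} {a : ℕ} (ha : a ∈ labs t) :
    ∃ p q : ℕ∞, ∀ C, Rep C t → ∀ c : ℕ, C a c ↔ p = c ∨ q = c := by
  induction t with
  | nil => simp [labs] at ha
  | node b l r ihl ihr =>
    simp only [labs, Multiset.mem_cons, Multiset.mem_add] at ha
    rcases ha with rfl | ha | ha
    · exact ⟨root l, root r, fun C h => h.1⟩
    · obtain ⟨p, q, h⟩ := ihl ha
      exact ⟨p, q, fun C hC => h C hC.2.2.1⟩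
    · obtain ⟨p, q, h⟩ := ihr ha
      exact ⟨p, q, fun C hC => h C hC.2.2.2⟩

/-- `Edge t a x`: the tree `t` has a vertex labelled `a` with a child labelled `x`. -/
def Edge : BT → ℕ → ℕ → Prop
  | nil, _, _ => False
  | node b l r, a, x => (b = a ∧ (root l = x ∨ root r = x)) ∨ Edge l a x ∨ Edge r a x

theorem edge_exists {t : BT} {x : ℕ} (hx : x ∈ labs t) (h : root t ≠ x) : ∃ a, Edge t a x := by
  induction t with
  | nil => simp [labs] at hx
  | node b l r ihl ihr =>
    simp only [labs, Multiset.mem_cons, Multiset.mem_add] at hx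
    rcases hx with rfl | hx | hx
    · exact absurd rfl h
    · by_cases hl : root l = x
      · exact ⟨b, .inl ⟨rfl, .inl hl⟩⟩
      · obtain ⟨a, ha⟩ := ihl hx hl
        exact ⟨a, .inr (.inl ha)⟩
    · by_cases hl : root r = x
      · exact ⟨b, .inl ⟨rfl, .inr hl⟩⟩
      · obtain ⟨a, ha⟩ := ihr hx hl
        exact ⟨a, .inr (.inr ha)⟩

theorem edge_spec {t : BT} (ht : Inc t) {a x : ℕ} (h : Edge t a x) :
    a ∈ labs t ∧ x ∈ labs t ∧ a < x := by
  induction t with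
  | nil => exact h.elim
  | node b l r ihl ihr =>
    obtain ⟨h1, h2, h3, h4⟩ := ht
    simp only [labs, Multiset.mem_cons, Multiset.mem_add]
    rcases h with ⟨rfl, h | h⟩ | h | h
    · exact ⟨.inl rfl, .inr (.inl (mem_labs_of_root h)), Nat.cast_lt.1 (h ▸ h1)⟩
    · exact ⟨.inl rfl, .inr (.inr (mem_labs_of_root h)), Nat.cast_lt.1 (h ▸ (h1.trans_le h2))⟩
    · have := ihl h3 h; tauto
    · have := ihr h4 h; tauto

theorem edge_root {t : BT} (ht : Inc t) {a x : ℕ} (h : Edge t a x) : root t ≠ x := by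
  have := edge_spec ht h
  exact ((root_le ht this.1).trans_lt (Nat.cast_lt.2 this.2.2)).ne

theorem nodup_node {b : ℕ} {l r : BT} (h : (labs (node b l r)).Nodup) :
    b ∉ labs l ∧ b ∉ labs r ∧ (labs l).Nodup ∧ (labs r).Nodup ∧ ∀ x ∈ labs l, x ∉ labs r := by
  simp only [labs, Multiset.nodup_cons, Multiset.mem_add, Multiset.nodup_add, not_or] at h
  exact ⟨h.1.1, h.1.2, h.2.1, h.2.2.1, fun x hx hx' => Multiset.disjoint_left.1 h.2.2.2 hx hx'⟩

theorem edge_unique {t : BT} (ht : Inc t) (hd : (labs t).Nodup) {a b x : ℕ} (h : Edge t a x)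
    (h' : Edge t b x) : a = b := by
  induction t with
  | nil => exact h.elim
  | node c l r ihl ihr =>
    obtain ⟨-, -, h3, h4⟩ := ht
    obtain ⟨d1, d2, d3, d4, d5⟩ := nodup_node hd
    have ml : ∀ {a}, Edge l a x → x ∈ labs l := fun h => (edge_spec h3 h).2.1
    have mr : ∀ {a}, Edge r a x → x ∈ labs r := fun h => (edge_spec h4 h).2.1
    have rl : ∀ {a}, Edge l a x → ¬ (root l = x ∨ root r = x) := by
      rintro a h (e | e)
      · exact edge_root h3 h e
      · exact d5 x (ml h) (mem_labs_of_root e)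
    have rr : ∀ {a}, Edge r a x → ¬ (root l = x ∨ root r = x) := by
      rintro a h (e | e)
      · exact d5 x (mem_labs_of_root e) (mr h)
      · exact edge_root h4 h e
    rcases h with ⟨rfl, h⟩ | h | h <;> rcases h' with ⟨rfl, h'⟩ | h' | h'
    · rfl
    · exact absurd h (rl h')
    · exact absurd h (rr h')
    · exact absurd h' (rl h)
    · exact ihl h3 d3 h h'
    · exact absurd (mr h') (d5 x (ml h))
    · exact absurd h' (rr h)
    · exact absurd (mr h) (d5 x (ml h'))
    · exact ihr h4 d4 h h'

theorem rep_of_edge {C : ℕ → ℕ → Prop} {t : BT} (ht : Inc t) (hd : (labs t).Nodup)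
    (h : ∀ a ∈ labs t, ∀ c, C a c ↔ Edge t a c) : Rep C t := by
  induction t with
  | nil => trivial
  | node b l r ihl ihr =>
    obtain ⟨-, -, h3, h4⟩ := ht
    obtain ⟨d1, d2, d3, d4, d5⟩ := nodup_node hd
    simp only [labs, Multiset.mem_cons, Multiset.mem_add] at h
    refine ⟨fun c => ?_, fun e => ?_, ihl h3 d3 fun a ha c => ?_, ihr h4 d4 fun a ha c => ?_⟩
    · rw [h b (.inl rfl), Edge]
      have e1 : ¬ Edge l b c := fun h => d1 (edge_spec h3 h).1
      have e2 : ¬ Edge r b c := fun h => d2 (edge_spec h4 h).1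
      simp [e1, e2]
    -- equal finite roots would repeat a label
    · by_contra hr
      obtain ⟨c, hc⟩ := ENat.ne_top_iff_exists.1 hr
      exact d5 c (mem_labs_of_root (e.trans hc.symm)) (mem_labs_of_root hc.symm)
    · rw [h a (.inr (.inl ha)), Edge]
      have e1 : b ≠ a := fun h => d1 (h ▸ ha)
      have e2 : ¬ Edge r a c := fun h => d5 a ha (edge_spec h4 h).1
      simp [e1, e2]
    · rw [h a (.inr (.inr ha)), Edge]
      have e1 : b ≠ a := fun h => d2 (h ▸ ha)
      have e2 : ¬ Edge l a c := fun h => d5 a (edge_spec h3 h).1 ha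
      simp [e1, e2]

theorem root_eq_zero {n : ℕ} (hn : 0 < n) {t : BT} (ht : t ∈ QSet (Multiset.range n)) :
    root t = (0 : ℕ) := by
  have h0 : 0 ∈ labs t := by rw [ht.2]; simpa using hn
  exact le_antisymm (root_le ht.1 h0) (by simp)

theorem exists_fun {n : ℕ} (hn : 0 < n) {t : BT} (ht : t ∈ QSet (Multiset.range n)) :
    ∃ f : Fin n → Fin n, IsIncTree n f ∧ Rep (CH f) t := by
  have h0 := root_eq_zero hn ht
  obtain ⟨hi, hl⟩ := ht
  have hd : (labs t).Nodup := hl ▸ Multiset.nodup_range n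
  have hmem : ∀ x, x ∈ labs t ↔ x < n := by simp [hl]
  have hex : ∀ i : Fin n, ∃ j : Fin n, ((i : ℕ) = 0 → j = i) ∧ ((i : ℕ) ≠ 0 → Edge t j i) := by
    intro i
    by_cases hi0 : (i : ℕ) = 0
    · exact ⟨i, fun _ => rfl, fun h => absurd hi0 h⟩
    · obtain ⟨a, ha⟩ := edge_exists ((hmem i).2 i.2) (by
        rw [h0, ne_eq, Nat.cast_inj]; exact fun h => hi0 h.symm)
      exact ⟨⟨a, (hmem a).1 (edge_spec hi ha).1⟩, fun h => absurd h hi0, fun _ => ha⟩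
  choose f hf0 hf using hex
  have hrep : Rep (CH f) t := by
    refine rep_of_edge hi hd fun a ha c => ⟨?_, fun h => ?_⟩
    · rintro ⟨h, hc, rfl⟩; exact hf ⟨c, h⟩ hc
    · have hs := edge_spec hi h
      have hc : c ≠ 0 := by omega
      exact ⟨(hmem c).1 hs.2.1, hc, edge_unique hi hd (hf ⟨c, (hmem c).1 hs.2.1⟩ hc) h⟩
  refine ⟨f, ⟨hf0, fun i h => (edge_spec hi (hf i h)).2.2, fun j => ?_⟩, hrep⟩
  obtain ⟨p, q, hpq⟩ := rep_children ((hmem j).2 j.2)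
  refine le_trans (Finset.card_le_card_of_injOn (t := {p, q}) (fun i : Fin n => ((i : ℕ) : ℕ∞))
    ?_ ?_) Finset.card_le_two
  · intro i hi
    simp only [Finset.coe_filter, Finset.mem_univ, true_and, Set.mem_ofPred_eq] at hi
    have := (hpq _ hrep i).1 ⟨i.2, hi.1, by rw [Fin.eta, hi.2]⟩
    simpa [eq_comm] using this
  · intro i _ j _ h
    exact Fin.ext (Nat.cast_inj.1 h)

theorem fun_unique {n : ℕ} {f g : Fin n → Fin n} (hf : IsIncTree n f) (hg : IsIncTree n g) {t : BT}
    (ht : t ∈ QSet (Multiset.range n)) (rf : Rep (CH f) t) (rg : Rep (CH g) t) : f = g := by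
  funext i
  by_cases hi : (i : ℕ) = 0
  · rw [hf.1 i hi, hg.1 i hi]
  · obtain ⟨p, q, h⟩ := rep_children (t := t) (a := f i) (by rw [ht.2]; simp)
    have h1 : CH f (f i) i := ⟨i.2, hi, rfl⟩
    rw [h _ rf, ← h _ rg] at h1
    obtain ⟨_, _, h2⟩ := h1
    exact Fin.ext h2.symm

/-- A step along the main chain is a step to the left child. -/
theorem mcStep_spec {n : ℕ} {f : Fin n → Fin n} {a : ℕ} (ha : a < n) {l r : BT}
    (ht : Inc (node a l r)) (hr : Rep (CH f) (node a l r)) :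
    (l = nil → mcStep n f ⟨a, ha⟩ = ⟨a, ha⟩) ∧
    (∀ c : ℕ, root l = c → ∃ hc : c < n, mcStep n f ⟨a, ha⟩ = ⟨c, hc⟩) := by
  obtain ⟨h1, h2, h3, h4⟩ := ht
  have hC := hr.1
  have hmem : ∀ i : Fin n, i ∈ (Finset.univ.filter fun i : Fin n =>
      (i : ℕ) ≠ 0 ∧ f i = ⟨a, ha⟩ ∧ ⟨a, ha⟩ < i) ↔ (root l = (i : ℕ) ∨ root r = (i : ℕ)) := by
    intro i
    rw [← hC]
    simp only [Finset.mem_filter, Finset.mem_univ, true_and]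
    constructor
    · rintro ⟨h0, h, -⟩; exact ⟨i.2, h0, by rw [Fin.eta, h]⟩
    · intro h
      have hlt : (a : ℕ∞) < (i : ℕ) := by
        rcases (hC _).1 h with h | h
        · exact h ▸ h1
        · exact h ▸ h1.trans_le h2
      obtain ⟨_, h0, h⟩ := h
      exact ⟨h0, Fin.ext h, Nat.cast_lt.1 hlt⟩
  constructor
  · rintro rfl
    rw [mcStep]
    apply dif_neg
    rintro ⟨i, hi⟩
    have : root r = ⊤ := top_le_iff.1 h2
    rw [hmem, this] at hi
    simp [root] at hi
  · intro c hc
    have hcn : c < n := ((hC c).2 (.inl hc)).1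
    refine ⟨hcn, ?_⟩
    have hcm := (hmem ⟨c, hcn⟩).2 (.inl hc)
    rw [mcStep]
    refine (dif_pos ⟨_, hcm⟩).trans ?_
    refine le_antisymm (Finset.min'_le _ _ hcm) (Finset.le_min' _ _ _ fun i hi => ?_)
    have : (c : ℕ∞) ≤ (i : ℕ) := by
      rcases (hmem i).1 hi with h | h
      · rw [← h, hc]
      · rw [← h, ← hc]; exact h2
    exact Nat.cast_le.1 this

theorem iterate_mcStep {n : ℕ} {f : Fin n → Fin n} {t : BT} (ht : Inc t) (hr : Rep (CH f) t)
    {m v : ℕ} (hv : v < n) (hm : (labs t).card ≤ m) (h : root t = v) :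
    (((mcStep n f)^[m] ⟨v, hv⟩ : Fin n) : ℕ) = leaf t := by
  induction t generalizing m v with
  | nil => simp [root] at h
  | node a l r ihl ihr =>
    have : a = v := by simpa [root] using h
    subst this
    obtain ⟨s1, s2⟩ := mcStep_spec hv ht hr
    by_cases hl : l = nil
    · rw [Function.iterate_fixed (s1 hl)]
      simp [leaf, hl]
    · obtain ⟨c, hc⟩ := ENat.ne_top_iff_exists.1 (fun h => hl (root_eq_top.1 h))
      obtain ⟨hcn, s⟩ := s2 c hc.symm
      simp only [labs, Multiset.card_cons, Multiset.card_add] at hm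
      obtain ⟨m, rfl⟩ : ∃ k, m = k + 1 := ⟨m - 1, by omega⟩
      rw [Function.iterate_succ_apply, s, ihl ht.2.2.1 hr.2.2.1 hcn (by omega) hc.symm, leaf,
        if_neg (by simpa [leaf_eq_top] using hl)]

theorem tree_equiv {n : ℕ} (hn : 0 < n) :
    ∃ e : {f : Fin n → Fin n // IsIncTree n f} ≃ QSet (Multiset.range n),
      ∀ f, (mcLeafVal f.1 : ℕ∞) = leaf (e f).1 + 1 := by
  have hex : ∀ f : {f : Fin n → Fin n // IsIncTree n f},
      ∃ t : QSet (Multiset.range n), Rep (CH f.1) t.1 := by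
    rintro ⟨f, hf⟩
    obtain ⟨t, h0, h1, h2, h3⟩ := exists_rep hf n 0 hn rfl
    exact ⟨⟨t, h1, labs_eq_range hf h1 h2 h0 h3⟩, h2⟩
  choose F hF using hex
  refine ⟨Equiv.ofBijective F ⟨fun f g h => ?_, fun t => ?_⟩, fun f => ?_⟩
  · exact Subtype.ext (fun_unique f.2 g.2 (F f).2 (hF f) (h ▸ hF g))
  · obtain ⟨f, hf, hr⟩ := exists_fun hn t.2
    exact ⟨⟨f, hf⟩, Subtype.ext (rep_unique (F _).2.1 t.2.1 (hF ⟨f, hf⟩) hr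
      ((root_eq_zero hn (F _).2).trans (root_eq_zero hn t.2).symm))⟩
  · rw [mcLeafVal, dif_pos hn]
    push_cast
    rw [iterate_mcStep (F f).2.1 (hF f) hn (by rw [(F f).2.2]; simp) (root_eq_zero hn (F f).2)]
    rfl

/-! ### Alternating words and alternating permutations -/

theorem alt_iff (l : List ℕ) : Alt l ↔ ∀ i : ℕ, ∀ h : i + 1 < l.length,
    if i % 2 = 0 then l[i + 1] < l[i] else l[i] < l[i + 1] := by
  induction l using List.twoStepInduction with
  | nil => simp [Alt]
  | singleton a => simp [Alt, AB]
  | cons_cons a b m ih _ =>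
    rw [Alt, AB_cons, ih]
    constructor
    · rintro ⟨h1, h2, h3⟩ i h
      rcases i with _ | _ | i
      · simpa using h1
      · rcases m with _ | ⟨d, m⟩
        · simp at h
        · simpa [hd] using h2
      · have := h3 i (by simp at h; omega)
        have e : (i + 1 + 1) % 2 = i % 2 := by omega
        simpa [e] using this
    · intro h
      refine ⟨by simpa using h 0 (by simp), ?_, fun i hi => ?_⟩
      · rcases m with _ | ⟨d, m⟩
        · simp [hd]
        · have h1 := h 1 (by simp)
          rw [if_neg (by decide)] at h1
          exact Nat.cast_lt.2 h1
      · have := h (i + 2) (by simp; omega)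
        have e : (i + 2) % 2 = i % 2 := by omega
        simpa [e] using this

theorem perm_equiv {n : ℕ} (hn : 0 < n) :
    ∃ e : {π : Equiv.Perm (Fin n) // IsAltPerm n π} ≃ ASet (Multiset.range n),
      ∀ π, (firstEntry π.1 : ℕ∞) = hd (e π).1 + 1 := by
  have halt : ∀ π : Equiv.Perm (Fin n), IsAltPerm n π ↔ Alt (List.ofFn fun i => (π i : ℕ)) := by
    intro π
    rw [alt_iff]
    simp only [List.length_ofFn, List.getElem_ofFn, IsAltPerm, Fin.lt_def]
  have hlab : ∀ π : Equiv.Perm (Fin n),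
      ((List.ofFn fun i => (π i : ℕ) : List ℕ) : Multiset ℕ) = Multiset.range n := by
    intro π
    refine (Multiset.Nodup.ext ?_ (Multiset.nodup_range n)).2 fun x => ?_
    · rw [Multiset.coe_nodup, List.nodup_ofFn]
      exact Fin.val_injective.comp π.injective
    · simp only [Multiset.mem_coe, List.mem_ofFn, Multiset.mem_range]
      constructor
      · rintro ⟨i, rfl⟩; exact (π i).2
      · intro h; exact ⟨π.symm ⟨x, h⟩, by simp⟩
  refine ⟨Equiv.ofBijective (fun π => ⟨List.ofFn fun i => (π.1 i : ℕ), (halt _).1 π.2, hlab _⟩)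
    ⟨fun π σ h => ?_, ?_⟩, fun π => ?_⟩
  · have h' : (List.ofFn fun i => (π.1 i : ℕ)) = List.ofFn fun i => (σ.1 i : ℕ) :=
      congrArg Subtype.val h
    have := List.ofFn_injective h'
    exact Subtype.ext (Equiv.ext fun i => Fin.ext (congrFun this i))
  · rintro ⟨l, hl, hM⟩
    have hlen : l.length = n := by simpa using congrArg Multiset.card hM
    subst hlen
    have hnd : l.Nodup := by rw [← Multiset.coe_nodup, hM]; exact Multiset.nodup_range _
    have hlt : ∀ x ∈ l, x < l.length := by
      intro x hx
      rw [← Multiset.mem_coe, hM] at hx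
      simpa using hx
    let p : Fin l.length → Fin l.length := fun i => ⟨l[i], hlt _ (List.getElem_mem _)⟩
    have hp : Function.Injective p := by
      intro i j h
      have h' : l[(i : ℕ)] = l[(j : ℕ)] := congrArg Fin.val h
      exact Fin.ext ((hnd.getElem_inj_iff).1 h')
    let π := Equiv.ofBijective p (Finite.injective_iff_bijective.1 hp)
    have hπ : (List.ofFn fun i => (π i : ℕ)) = l := List.ofFn_getElem
    exact ⟨⟨π, (halt π).2 (by rw [hπ]; exact hl)⟩, Subtype.ext hπ⟩
  · obtain ⟨n, rfl⟩ : ∃ k, n = k + 1 := ⟨n - 1, by omega⟩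
    rw [firstEntry, dif_pos hn]
    simp [hd, List.ofFn_succ]

end BT

/-- For every `n ≥ 1` there is a bijection `φ` from alternating permutations of `[n]`
to 0-1-2 increasing trees on `[n]` with `p(φ(π)) = π₁` for all `π`. -/
theorem exists_bijection_alt_incTree (n : ℕ) (hn : 1 ≤ n) :
    ∃ φ : {π : Equiv.Perm (Fin n) // IsAltPerm n π} ≃
          {f : Fin n → Fin n // IsIncTree n f},
      ∀ π : {π : Equiv.Perm (Fin n) // IsAltPerm n π},
        mcLeafVal (φ π).1 = firstEntry π.1 := by
  obtain ⟨P, hP⟩ := BT.perm_equiv hn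
  obtain ⟨T, hT⟩ := BT.tree_equiv hn
  obtain ⟨e, he⟩ := BT.exists_equiv (Multiset.range n) (Multiset.nodup_range n)
  refine ⟨P.trans (e.trans T.symm), fun π => Nat.cast_inj (R := ℕ∞).1 ?_⟩
  rw [hT, hP, ← he]
  simp
end

section
/- For all n ≥ 1 and all k ∈ [n], the sets A_{n,k} and T_{n,k} have the same cardinality: |A_{n,k}| = |T_{n,k}|. -/
/-! ### The weighted recursion -/

section Numeric

/-- The sum of `Φ p l` over all increasing trees on `m + 1` vertices, `p` being the (0-indexed)
main-chain leaf and `l` the number of leaves, in recursive form. The three terms stand for attaching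
the new vertex `m + 1` to the main-chain leaf, to one of the `l - 1` other leaves, or to one of the
`m + 2 - 2 l` vertices with one child. -/
def weightSum : ℕ → (ℕ → ℕ → ℤ) → ℤ
  | 0, Φ => Φ 0 1
  | m + 1, Φ => weightSum m fun p l =>
      Φ (m + 1) l + ((l : ℤ) - 1) * Φ p l + ((m : ℤ) + 2 - 2 * l) * Φ p (l + 1)

/-- The sum of `w l` over the trees on `m + 1` vertices with main-chain leaf `k`. -/
def leafSum (m k : ℕ) (w : ℕ → ℤ) : ℤ := weightSum m fun p l => if p = k then w l else 0

/-- The sum of `w l` over all trees on `m + 1` vertices. -/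
def totalSum (m : ℕ) (w : ℕ → ℤ) : ℤ := weightSum m fun _ l => w l

/-- The total weight of the extensions, away from the main-chain leaf, of a tree with `m + 1`
vertices and `l` leaves. -/
def growOff (m : ℕ) (w : ℕ → ℤ) (l : ℕ) : ℤ :=
  ((l : ℤ) - 1) * w l + ((m : ℤ) + 2 - 2 * l) * w (l + 1)

/-- Only the values of `Φ` at main-chain leaves `p ≤ m` matter. -/
lemma weightSum_congr (m : ℕ) (Φ Ψ : ℕ → ℕ → ℤ) (h : ∀ p ≤ m, ∀ l, Φ p l = Ψ p l) :
    weightSum m Φ = weightSum m Ψ := by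
  induction m generalizing Φ Ψ with
  | zero => exact h 0 le_rfl 1
  | succ m ih =>
    refine ih _ _ fun p hp l => ?_
    simp only [h (m + 1) le_rfl, h p (by omega)]

lemma weightSum_linear (m : ℕ) (a b : ℤ) (Φ Ψ : ℕ → ℕ → ℤ) :
    weightSum m (fun p l => a * Φ p l + b * Ψ p l) = a * weightSum m Φ + b * weightSum m Ψ := by
  induction m generalizing Φ Ψ with
  | zero => rfl
  | succ m ih =>
    simp only [weightSum]
    rw [← ih]
    congr 1; funext p l; ring

lemma leafSum_linear (m k : ℕ) (a b : ℤ) (v w : ℕ → ℤ) :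
    leafSum m k (fun l => a * v l + b * w l) = a * leafSum m k v + b * leafSum m k w := by
  unfold leafSum
  rw [← weightSum_linear]
  congr 1; funext p l; split_ifs <;> simp

lemma totalSum_linear (m : ℕ) (a b : ℤ) (v w : ℕ → ℤ) :
    totalSum m (fun l => a * v l + b * w l) = a * totalSum m v + b * totalSum m w := by
  unfold totalSum
  rw [← weightSum_linear]

lemma leafSum_succ (m k : ℕ) (hk : k ≤ m) (w : ℕ → ℤ) :
    leafSum (m + 1) k w = leafSum m k (growOff m w) := by
  simp only [leafSum, weightSum, growOff]
  congr 1; funext p l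
  rw [if_neg (by omega)]
  split_ifs <;> ring

/-- The new vertex becomes the main-chain leaf in exactly one extension of each tree. -/
lemma leafSum_last (m : ℕ) (w : ℕ → ℤ) : leafSum (m + 1) (m + 1) w = totalSum m w := by
  simp only [leafSum, weightSum, totalSum]
  refine weightSum_congr _ _ _ fun p hp l => ?_
  simp [show p ≠ m + 1 by omega]

lemma totalSum_succ (m : ℕ) (w : ℕ → ℤ) :
    totalSum (m + 1) w = totalSum m (fun l => w l + growOff m w l) := by
  simp only [totalSum, weightSum, growOff]
  congr 1; funext p l; ring

lemma leafSum_root (m : ℕ) (w : ℕ → ℤ) : leafSum (m + 1) 0 w = 0 := by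
  induction m generalizing w with
  | zero => simp [leafSum, weightSum]
  | succ m ih => rw [leafSum_succ _ _ (by omega), ih]

/-- Vertex `1` is the main-chain leaf exactly when the remaining tree hangs off the root by a
second edge; the leaf `1` adds one to the number of leaves of that tree. -/
lemma leafSum_one (m : ℕ) (w : ℕ → ℤ) :
    leafSum (m + 2) 1 w = totalSum m (fun l => w (l + 1)) := by
  induction m generalizing w with
  | zero => simp [leafSum, totalSum, weightSum]
  | succ m ih =>
    rw [leafSum_succ _ _ (by omega), ih, totalSum_succ]
    congr 1; funext l
    simp only [growOff]; push_cast; ring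

/-- The weighted second-difference equation. Both sides are compatible with attaching a new
vertex, which reduces the claim to `m = k`, where everything is a `totalSum`. -/
lemma leafSum_second_diff (m k : ℕ) (hk : k ≤ m) (w : ℕ → ℤ) :
    leafSum (m + 2) (k + 2) w - 2 * leafSum (m + 2) (k + 1) w + leafSum (m + 2) k w =
      leafSum m k (fun l => w l - 2 * w (l + 1)) := by
  induction m, hk using Nat.le_induction generalizing w with
  | base =>
    rw [leafSum_last, leafSum_succ (k + 1) (k + 1) le_rfl, leafSum_last,
      leafSum_succ (k + 1) k (by omega), leafSum_succ k k le_rfl]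
    cases k with
    | zero => simp [leafSum, totalSum, weightSum, growOff]
    | succ j =>
      rw [leafSum_last, leafSum_last, totalSum_succ (j + 1), totalSum_succ j, totalSum_succ j]
      have key : ∀ u v x y : ℕ → ℤ, (∀ l, u l = 2 * v l - x l + y l) →
          totalSum j u - 2 * totalSum j v + totalSum j x = totalSum j y := by
        intro u v x y h
        have e : u = fun l => 1 * (2 * v l + (-1) * x l) + 1 * y l := by
          funext l; rw [h]; ring
        rw [e, totalSum_linear, totalSum_linear]; ring
      -- The claim reduces to an identity between the weights on trees with `j + 1` vertices.
      apply key
      intro l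
      simp only [growOff]; push_cast; ring
  | succ m hk ih =>
    rw [leafSum_succ (m + 2) (k + 2) (by omega), leafSum_succ (m + 2) (k + 1) (by omega),
      leafSum_succ (m + 2) k (by omega), ih, leafSum_succ m k hk]
    congr 1; funext l
    simp only [growOff]; push_cast; ring

/-- Entringer's recurrence for trees: the second-difference equation integrated once, using the
recurrence one level down at `m - k` for the reflected index. -/
lemma leafSum_entringer (m k : ℕ) (hk : k ≤ m) :
    leafSum (m + 1) (k + 1) (fun _ => 1) =
      leafSum (m + 1) k (fun _ => 1) + leafSum m (m - k) (fun _ => 1) := by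
  induction m generalizing k with
  | zero =>
    obtain rfl : k = 0 := by omega
    simp [leafSum, weightSum]
  | succ m ihm =>
    induction k with
    | zero => rw [leafSum_one, leafSum_root, Nat.sub_zero, leafSum_last, zero_add]
    | succ k ihk =>
      have h2 := leafSum_second_diff m k (by omega) (fun _ => 1)
      have h1 := ihk (by omega)
      have h3 := ihm (m - k) (by omega)
      have h4 := leafSum_linear m k (-1) 0 (fun _ => 1) (fun _ => 1)
      norm_num at h2 h4
      rw [show m + 1 - k = m - k + 1 by omega] at h1
      rw [show m - (m - k) = k by omega] at h3
      rw [show m + 1 - (k + 1) = m - k by omega]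
      simp only [show m + 1 + 1 = m + 2 from rfl, show k + 1 + 1 = k + 2 from rfl] at *
      linarith

end Numeric

/-! ### Increasing trees -/

section Trees
open Finset

/-- The number of children of the vertex `x`; the root is not counted as its own child. -/
def childCount {n : ℕ} (f : Fin n → Fin n) (x : Fin n) : ℕ :=
  (univ.filter fun i : Fin n => (i : ℕ) ≠ 0 ∧ f i = x).card

/-- The number of vertices without children. -/
def leafCount {n : ℕ} (f : Fin n → Fin n) : ℕ := (univ.filter fun x => childCount f x = 0).card

open Classical in
/-- The finset of 0-1-2 increasing trees on `n` vertices. -/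
noncomputable def trees (n : ℕ) : Finset (Fin n → Fin n) := univ.filter (IsIncTree n)

/-- The main-chain leaf as a vertex: `m + 1` steps from the root suffice on `m + 1` vertices. -/
def chainLeaf {m : ℕ} (f : Fin (m + 1) → Fin (m + 1)) : Fin (m + 1) :=
  (mcStep (m + 1) f)^[m + 1] 0

/-- The tree `g` with a new largest vertex attached to `j`. -/
def addLeaf {m : ℕ} (g : Fin (m + 1) → Fin (m + 1)) (j : Fin (m + 1)) :
    Fin (m + 2) → Fin (m + 2) :=
  Fin.snoc (α := fun _ => Fin (m + 2)) (fun i => (g i).castSucc) j.castSucc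

variable {m : ℕ} {g : Fin (m + 1) → Fin (m + 1)} {j : Fin (m + 1)}

@[simp] lemma addLeaf_castSucc (i : Fin (m + 1)) : addLeaf g j i.castSucc = (g i).castSucc := by
  simp [addLeaf]

@[simp] lemma addLeaf_last : addLeaf g j (Fin.last _) = j.castSucc := by simp [addLeaf]

lemma childCount_addLeaf_castSucc (x : Fin (m + 1)) :
    childCount (addLeaf g j) x.castSucc = childCount g x + if j = x then 1 else 0 := by
  simp [childCount, card_filter, -sum_boole, Fin.sum_univ_castSucc]

lemma childCount_addLeaf_last : childCount (addLeaf g j) (Fin.last _) = 0 := by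
  simp [childCount, card_filter, -sum_boole, Fin.sum_univ_castSucc, (Fin.castSucc_lt_last _).ne]

lemma isIncTree_addLeaf : IsIncTree (m + 2) (addLeaf g j) ↔
    IsIncTree (m + 1) g ∧ childCount g j ≤ 1 := by
  change (_ ∧ _ ∧ ∀ x, childCount _ x ≤ 2) ↔ (_ ∧ _ ∧ ∀ x, childCount _ x ≤ 2) ∧ _
  simp only [Fin.forall_fin_succ' (n := m + 1), addLeaf_castSucc, addLeaf_last, childCount_addLeaf_castSucc,
    childCount_addLeaf_last, Fin.val_castSucc, Fin.val_last, Fin.castSucc_inj]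
  constructor
  · rintro ⟨⟨h1, -⟩, ⟨h2, -⟩, h3, -⟩
    refine ⟨⟨h1, h2, fun x => le_trans (Nat.le_add_right _ _) (h3 x)⟩, ?_⟩
    have := h3 j
    simp at this; omega
  · rintro ⟨⟨h1, h2, h3⟩, h4⟩
    refine ⟨⟨h1, by simp⟩, ⟨h2, fun _ => j.2⟩, fun x => ?_, by simp⟩
    split_ifs with h
    · subst h; omega
    · simpa using h3 x

lemma exists_eq_addLeaf {f : Fin (m + 2) → Fin (m + 2)} (hf : IsIncTree (m + 2) f) :
    ∃ g j, f = addLeaf (m := m) g j := by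
  have hlt : ∀ i, (f i : ℕ) < m + 1 := by
    intro i
    by_cases hi : (i : ℕ) = 0
    · rw [hf.1 i hi]; omega
    · have := hf.2.1 i hi; omega
  refine ⟨fun i => ⟨f i.castSucc, hlt _⟩, ⟨f (Fin.last _), hlt _⟩, funext fun i => ?_⟩
  induction i using Fin.lastCases <;> simp

lemma addLeaf_injective {g' : Fin (m + 1) → Fin (m + 1)} {j' : Fin (m + 1)}
    (h : addLeaf g j = addLeaf g' j') : g = g' ∧ j = j' := by
  constructor
  · funext i
    simpa using congrFun h i.castSucc
  · simpa using congrFun h (Fin.last _)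

/-- Every tree on `m + 2` vertices comes from a unique tree on `m + 1` vertices by attaching the
largest vertex. -/
lemma sum_trees_succ (F : (Fin (m + 2) → Fin (m + 2)) → ℤ) :
    ∑ f ∈ trees (m + 2), F f =
      ∑ g ∈ trees (m + 1), ∑ j with childCount g j ≤ 1, F (addLeaf g j) := by
  rw [sum_sigma']
  symm
  refine sum_bij (fun x _ => addLeaf x.1 x.2) ?_ ?_ ?_ ?_
  · intro x hx
    simpa [trees, isIncTree_addLeaf] using hx
  · rintro ⟨g, j⟩ _ ⟨g', j'⟩ _ h
    obtain ⟨rfl, rfl⟩ := addLeaf_injective h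
    rfl
  · intro f hf
    have hf' : IsIncTree (m + 2) f := by simpa [trees] using hf
    obtain ⟨g, j, rfl⟩ := exists_eq_addLeaf hf'
    exact ⟨⟨g, j⟩, by simpa [trees, isIncTree_addLeaf] using hf', rfl⟩
  · intros; rfl

lemma leafCount_addLeaf :
    leafCount (addLeaf g j) = if childCount g j = 0 then leafCount g else leafCount g + 1 := by
  have h1 : leafCount (addLeaf g j) = (∑ x, if childCount g x = 0 ∧ j ≠ x then 1 else 0) + 1 := by
    simp [leafCount, card_filter, -sum_boole, Fin.sum_univ_castSucc, childCount_addLeaf_castSucc,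
      childCount_addLeaf_last]
  rw [h1]
  split_ifs with h
  · have : leafCount g = ∑ x, ((if childCount g x = 0 ∧ j ≠ x then 1 else 0) +
        if j = x then 1 else 0) := by
      rw [leafCount, card_filter]
      refine sum_congr rfl fun x _ => ?_
      by_cases hx : j = x
      · subst hx; simp [h]
      · simp [hx]
    rw [this, sum_add_distrib]; simp
  · rw [leafCount, card_filter]
    congr 1
    refine sum_congr rfl fun x _ => ?_
    by_cases hx : j = x
    · subst hx; simp [h]
    · simp [hx]

lemma sum_childCount (g : Fin (m + 1) → Fin (m + 1)) : ∑ x, childCount g x = m := by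
  have := card_eq_sum_card_fiberwise (s := univ.filter fun i : Fin (m + 1) => (i : ℕ) ≠ 0)
    (t := univ) (f := g) (by simp)
  simp only [filter_filter] at this
  unfold childCount
  rw [← this, card_filter, Fin.sum_univ_succ]
  simp

section MainChain
variable {n : ℕ} {f : Fin n → Fin n}

lemma mcStep_of_leaf {x : Fin n} (hx : childCount f x = 0) : mcStep n f x = x := by
  have : (univ.filter fun i : Fin n => (i : ℕ) ≠ 0 ∧ f i = x ∧ x < i) = ∅ := by
    rw [childCount, card_eq_zero, filter_eq_empty_iff] at hx
    rw [filter_eq_empty_iff]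
    exact fun i hi h => hx hi ⟨h.1, h.2.1⟩
  simp [mcStep, this]

lemma exists_child {x : Fin n} (hx : childCount f x ≠ 0) : ∃ i : Fin n, (i : ℕ) ≠ 0 ∧ f i = x := by
  rw [childCount, Finset.card_ne_zero] at hx
  obtain ⟨i, hi⟩ := hx
  exact ⟨i, by simpa using hi⟩

lemma mcStep_eq (hf : IsIncTree n f) {x y : Fin n} (hy : (y : ℕ) ≠ 0) (hxy : f y = x)
    (hmin : ∀ i : Fin n, (i : ℕ) ≠ 0 → f i = x → y ≤ i) : mcStep n f x = y := by
  have hmem : y ∈ univ.filter fun i : Fin n => (i : ℕ) ≠ 0 ∧ f i = x ∧ x < i := by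
    have := hf.2.1 y hy
    simp only [mem_filter, mem_univ, true_and]
    exact ⟨hy, hxy, by rw [← hxy]; exact this⟩
  simp only [mcStep]
  rw [dif_pos ⟨y, hmem⟩]
  apply le_antisymm (min'_le _ _ hmem)
  apply le_min'
  intro i hi
  simp only [mem_filter, mem_univ, true_and] at hi
  exact hmin i hi.1 hi.2.1

lemma exists_min_child (hf : IsIncTree n f) {x : Fin n} (hx : childCount f x ≠ 0) :
    ∃ y : Fin n, (y : ℕ) ≠ 0 ∧ f y = x ∧ (∀ i : Fin n, (i : ℕ) ≠ 0 → f i = x → y ≤ i) ∧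
      mcStep n f x = y := by
  obtain ⟨y, hy, hmin⟩ := exists_min_image (univ.filter fun i : Fin n => (i : ℕ) ≠ 0 ∧ f i = x) id
    (by obtain ⟨i, hi⟩ := exists_child hx; exact ⟨i, by simpa using hi⟩)
  simp only [mem_filter, mem_univ, true_and, id, and_imp] at hy hmin
  exact ⟨y, hy.1, hy.2, hmin, mcStep_eq hf hy.1 hy.2 hmin⟩

lemma lt_mcStep (hf : IsIncTree n f) {x : Fin n} (hx : childCount f x ≠ 0) :
    x < mcStep n f x := by
  obtain ⟨y, hy, hyx, -, h⟩ := exists_min_child hf hx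
  rw [h, ← hyx]
  exact hf.2.1 y hy

end MainChain

/-- The main chain strictly increases until it meets a leaf, so it is at a leaf after `m + 1`
steps. -/
lemma childCount_chainLeaf (hg : IsIncTree (m + 1) g) : childCount g (chainLeaf g) = 0 := by
  have key : ∀ i : ℕ, childCount g ((mcStep (m + 1) g)^[i] 0) = 0 ∨
      i ≤ ((mcStep (m + 1) g)^[i] 0 : Fin (m + 1)) := by
    intro i
    induction i with
    | zero => simp
    | succ i ih =>
      rw [Function.iterate_succ_apply']
      by_cases h : childCount g ((mcStep (m + 1) g)^[i] 0) = 0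
      · left; rwa [mcStep_of_leaf h]
      · right
        have h1 := lt_mcStep hg h
        have h2 := ih.resolve_left h
        have h3 : (((mcStep (m + 1) g)^[i] 0 : Fin (m + 1)) : ℕ) <
          (mcStep (m + 1) g ((mcStep (m + 1) g)^[i] 0) : Fin (m + 1)) := h1
        omega
  refine (key (m + 1)).resolve_right ?_
  have := ((mcStep (m + 1) g)^[m + 1] 0).2
  omega

/-- A leaf met by the main chain at any time is the main-chain leaf. -/
lemma chainLeaf_eq (hg : IsIncTree (m + 1) g) {z : Fin (m + 1)} (hz : childCount g z = 0)
    {i : ℕ} (hi : (mcStep (m + 1) g)^[i] 0 = z) : chainLeaf g = z := by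
  have h1 : (mcStep (m + 1) g)^[i + (m + 1)] 0 = z := by
    rw [show i + (m + 1) = (m + 1) + i from Nat.add_comm _ _, Function.iterate_add_apply, hi, Function.iterate_fixed (mcStep_of_leaf hz)]
  rw [Function.iterate_add_apply] at h1
  rw [← h1]
  exact (Function.iterate_fixed (mcStep_of_leaf (childCount_chainLeaf hg)) i).symm

/-- The new vertex is the largest, so it is the smallest child of `j` only if `j` was a leaf. -/
lemma mcStep_addLeaf (hg : IsIncTree (m + 1) g) (hj : childCount g j ≤ 1) {x : Fin (m + 1)}
    (hx : x ≠ j ∨ childCount g j ≠ 0) :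
    mcStep (m + 2) (addLeaf g j) x.castSucc = (mcStep (m + 1) g x).castSucc := by
  by_cases h0 : childCount g x = 0
  · rw [mcStep_of_leaf h0, mcStep_of_leaf]
    rw [childCount_addLeaf_castSucc, h0, if_neg]
    rintro rfl
    simp_all
  · obtain ⟨y, hy, hyx, hmin, h⟩ := exists_min_child hg h0
    rw [h]
    refine mcStep_eq (isIncTree_addLeaf.2 ⟨hg, hj⟩) (by simpa using hy) (by simp [hyx]) ?_
    intro i hi hix
    induction i using Fin.lastCases with
    | last => exact Fin.le_last _
    | cast i => exact hmin i (by simpa using hi) (by simpa using hix)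

lemma iterate_mcStep_addLeaf (hg : IsIncTree (m + 1) g) (hj : childCount g j ≤ 1) (i : ℕ)
    (h : ∀ i' < i, (mcStep (m + 1) g)^[i'] 0 ≠ j ∨ childCount g j ≠ 0) :
    (mcStep (m + 2) (addLeaf g j))^[i] 0 = ((mcStep (m + 1) g)^[i] 0).castSucc := by
  induction i with
  | zero => rfl
  | succ i ih =>
    rw [Function.iterate_succ_apply', Function.iterate_succ_apply',
      ih fun i' hi' => h i' (by omega), mcStep_addLeaf hg hj (h i (by omega))]

lemma chainLeaf_addLeaf_of_ne (hg : IsIncTree (m + 1) g) (hj : childCount g j ≤ 1)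
    (h : j ≠ chainLeaf g) : chainLeaf (addLeaf g j) = (chainLeaf g).castSucc := by
  refine chainLeaf_eq (isIncTree_addLeaf.2 ⟨hg, hj⟩) (i := m + 1) ?_
    (iterate_mcStep_addLeaf hg hj _ ?_)
  · rw [childCount_addLeaf_castSucc, childCount_chainLeaf hg, if_neg h]
  · intro i _
    by_contra! hc
    exact h (chainLeaf_eq hg hc.2 hc.1).symm

lemma chainLeaf_addLeaf_self (hg : IsIncTree (m + 1) g) :
    chainLeaf (addLeaf g (chainLeaf g)) = Fin.last _ := by
  classical
  have h0 := childCount_chainLeaf hg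
  have hT := isIncTree_addLeaf.2 ⟨hg, h0.trans_le (Nat.zero_le 1)⟩
  have hex : ∃ i, (mcStep (m + 1) g)^[i] 0 = chainLeaf g := ⟨m + 1, rfl⟩
  -- At the first time the chain of `g` meets its leaf, the chain of the extension is still the same,
  -- and its next step goes to the new vertex.
  refine chainLeaf_eq hT (i := Nat.find hex + 1) childCount_addLeaf_last ?_
  rw [Function.iterate_succ_apply', iterate_mcStep_addLeaf hg (by omega) _
    fun i' hi' => Or.inl (Nat.find_min hex hi'), Nat.find_spec hex]
  refine mcStep_eq hT (by simp) (by simp) fun i hi hix => ?_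
  induction i using Fin.lastCases with
  | last => exact le_rfl
  | cast i =>
    exfalso
    rw [childCount, card_eq_zero, filter_eq_empty_iff] at h0
    exact h0 (mem_univ i) ⟨by simpa using hi, by simpa using hix⟩

/-- The contribution of all extensions of one tree `g`. -/
lemma sum_addLeaf (hg : IsIncTree (m + 1) g) (Φ : ℕ → ℕ → ℤ) :
    ∑ j with childCount g j ≤ 1, Φ (chainLeaf (addLeaf g j)) (leafCount (addLeaf g j)) =
      Φ (m + 1) (leafCount g) + ((leafCount g : ℤ) - 1) * Φ (chainLeaf g) (leafCount g) +
        ((m : ℤ) + 2 - 2 * leafCount g) * Φ (chainLeaf g) (leafCount g + 1) := by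
  set l := leafCount g with hl
  set p := chainLeaf g with hp
  have hp0 : childCount g p = 0 := childCount_chainLeaf hg
  -- For `c ≤ 2`, the indicator of `c = 1` is `2 - c - 2 [c = 0]`; summed over all vertices this
  -- gives `m + 2 - 2 l`.
  have hterm : ∀ j, (if childCount g j ≤ 1 then
      Φ (chainLeaf (addLeaf g j)) (leafCount (addLeaf g j)) else 0) =
      (if j = p then Φ (m + 1) l - Φ p l else 0) +
      ((if childCount g j = 0 then 1 else 0 : ℕ) : ℤ) * Φ p l +
      (2 - (childCount g j : ℤ) - 2 * ((if childCount g j = 0 then 1 else 0 : ℕ) : ℤ)) *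
        Φ p (l + 1) := by
    intro j
    have h2 : childCount g j ≤ 2 := hg.2.2 j
    by_cases hjp : j = p
    · rw [hjp, leafCount_addLeaf, hp0, hp, chainLeaf_addLeaf_self hg, ← hp, ← hl]
      simp
    · by_cases hj : childCount g j ≤ 1
      · rw [if_pos hj, chainLeaf_addLeaf_of_ne hg hj hjp, leafCount_addLeaf, if_neg hjp]
        obtain h | h : childCount g j = 0 ∨ childCount g j = 1 := by omega
        · simp [h, ← hl, ← hp]
        · simp [h, ← hl, ← hp]
      · have : childCount g j = 2 := by omega
        simp [this, hjp]
  rw [sum_filter, sum_congr rfl fun j _ => hterm j, sum_add_distrib, sum_add_distrib,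
    ← sum_mul, ← sum_mul, sum_sub_distrib, sum_sub_distrib, ← mul_sum, ← Nat.cast_sum,
    ← Nat.cast_sum, sum_childCount, ← card_filter, sum_ite_eq']
  change _ + (l : ℤ) * _ + (_ - 2 * (l : ℤ)) * _ = _
  simp
  ring

lemma sum_trees_eq_weightSum (m : ℕ) (Φ : ℕ → ℕ → ℤ) :
    ∑ f ∈ trees (m + 1), Φ (chainLeaf f) (leafCount f) = weightSum m Φ := by
  induction m generalizing Φ with
  | zero =>
    have : trees 1 = {id} := by
      ext f
      have hf : f = id := Subsingleton.elim _ _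
      simp only [trees, mem_filter, mem_univ, true_and, mem_singleton, hf, iff_true]
      exact ⟨fun i _ => rfl, fun i hi => absurd (by omega) hi,
        fun j => (card_le_univ _).trans (by simp)⟩
    rw [this, sum_singleton]
    simp [weightSum, leafCount, childCount, Subsingleton.elim _ (0 : Fin 1)]
  | succ m ih =>
    rw [sum_trees_succ, weightSum, ← ih]
    refine sum_congr rfl fun g hg => ?_
    exact sum_addLeaf (by simpa [trees] using hg) Φ

lemma card_trees_eq_leafSum (m k : ℕ) :
    (Nat.card {f : Fin (m + 1) → Fin (m + 1) // IsIncTree (m + 1) f ∧ mcLeafVal f = k + 1} : ℤ) =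
      leafSum m k (fun _ => 1) := by
  classical
  rw [leafSum, ← sum_trees_eq_weightSum, Nat.card_eq_fintype_card, Fintype.card_subtype, trees,
    sum_filter, card_filter]
  push_cast
  refine sum_congr rfl fun f _ => ?_
  have : mcLeafVal f = (chainLeaf f : ℕ) + 1 := by
    rw [mcLeafVal, dif_pos (Nat.succ_pos m)]; rfl
  rw [this]
  simp [ite_and]

end Trees

/-! ### Alternating permutations -/

section Permutations
open Finset

open Classical in
/-- The finset of alternating permutations of `Fin n`. -/
noncomputable def altPerms (n : ℕ) : Finset (Equiv.Perm (Fin n)) := univ.filter (IsAltPerm n)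

/-- The number of alternating permutations of `Fin (m + 1)` with first entry `k` (0-indexed). -/
noncomputable def altCount (m k : ℕ) : ℕ :=
  ((altPerms (m + 1)).filter fun π => (π 0 : ℕ) = k).card

/-- The word that starts with `k` and continues with the complement of `τ`, relabelled
order-preservingly to avoid `k`. -/
def consFun {m : ℕ} (k : Fin (m + 2)) (τ : Equiv.Perm (Fin (m + 1))) : Fin (m + 2) → Fin (m + 2) :=
  Fin.cons k fun i => k.succAbove (τ i).rev

lemma consFun_injective {m : ℕ} (k : Fin (m + 2)) (τ : Equiv.Perm (Fin (m + 1))) :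
    Function.Injective (consFun k τ) := by
  rw [consFun, Fin.cons_injective_iff]
  refine ⟨?_, fun a b h => ?_⟩
  · rintro ⟨i, hi⟩
    exact Fin.succAbove_ne _ _ hi
  · simpa using h

/-- `consFun k τ` as a permutation. -/
noncomputable def consPerm {m : ℕ} (k : Fin (m + 2)) (τ : Equiv.Perm (Fin (m + 1))) :
    Equiv.Perm (Fin (m + 2)) :=
  Equiv.ofBijective _ (Finite.injective_iff_bijective.1 (consFun_injective k τ))

@[simp] lemma consPerm_zero {m : ℕ} (k : Fin (m + 2)) (τ : Equiv.Perm (Fin (m + 1))) :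
    consPerm k τ 0 = k := rfl

@[simp] lemma consPerm_succ {m : ℕ} (k : Fin (m + 2)) (τ : Equiv.Perm (Fin (m + 1)))
    (i : Fin (m + 1)) : consPerm k τ i.succ = k.succAbove (τ i).rev := rfl

lemma exists_eq_consPerm {m : ℕ} (π : Equiv.Perm (Fin (m + 2))) : ∃ τ, π = consPerm (π 0) τ := by
  have h : ∀ i : Fin (m + 1), ∃ j : Fin (m + 1), (π 0).succAbove j.rev = π i.succ := by
    intro i
    obtain ⟨j, hj⟩ := Fin.exists_succAbove_eq (x := π i.succ) (y := π 0)
      (fun h => Fin.succ_ne_zero i (π.injective h))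
    exact ⟨j.rev, by simpa using hj⟩
  choose s hs using h
  have hinj : Function.Injective s := by
    intro a b hab
    have := (hs a).symm.trans ((congrArg (fun j => (π 0).succAbove (Fin.rev j)) hab).trans (hs b))
    simpa using this
  refine ⟨Equiv.ofBijective s (Finite.injective_iff_bijective.1 hinj), ?_⟩
  ext i
  induction i using Fin.cases with
  | zero => rfl
  | succ i => rw [consPerm_succ, Equiv.ofBijective_apply, hs]

/-- The complement turns down-up into up-down, so only the initial descent is a condition: the
second entry comes from `m - τ 0`, and it is below `k` exactly when `m - τ 0 < k`. -/
lemma isAltPerm_consPerm {m : ℕ} (k : Fin (m + 2)) (τ : Equiv.Perm (Fin (m + 1))) :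
    IsAltPerm (m + 2) (consPerm k τ) ↔ IsAltPerm (m + 1) τ ∧ m - (τ 0 : ℕ) < k := by
  have h0 : (consPerm k τ ⟨1, by omega⟩ < consPerm k τ ⟨0, by omega⟩) ↔ m - (τ 0 : ℕ) < k := by
    change consPerm k τ (Fin.succ 0) < consPerm k τ 0 ↔ _
    rw [consPerm_succ, consPerm_zero, Fin.succAbove_lt_iff_castSucc_lt, Fin.lt_def]
    simp [Fin.val_rev]
  have hs : ∀ (i : ℕ) (h : i + 1 < m + 1),
      (consPerm k τ ⟨i + 1 + 1, by omega⟩ < consPerm k τ ⟨i + 1, by omega⟩ ↔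
        τ ⟨i, by omega⟩ < τ ⟨i + 1, h⟩) ∧
      (consPerm k τ ⟨i + 1, by omega⟩ < consPerm k τ ⟨i + 1 + 1, by omega⟩ ↔
        τ ⟨i + 1, h⟩ < τ ⟨i, by omega⟩) := by
    intro i h
    have e1 : consPerm k τ ⟨i + 1, by omega⟩ = _ := consPerm_succ k τ ⟨i, by omega⟩
    have e2 : consPerm k τ ⟨i + 1 + 1, by omega⟩ = _ := consPerm_succ k τ ⟨i + 1, h⟩
    rw [e1, e2, Fin.succAbove_lt_succAbove_iff, Fin.succAbove_lt_succAbove_iff,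
      Fin.rev_lt_rev, Fin.rev_lt_rev]
    exact ⟨Iff.rfl, Iff.rfl⟩
  constructor
  · intro H
    refine ⟨fun i h => ?_, h0.1 (by simpa using H 0 (by omega))⟩
    have := H (i + 1) (by omega)
    rcases Nat.mod_two_eq_zero_or_one i with hi | hi
    · rw [if_pos hi]
      rw [if_neg (by omega)] at this
      exact (hs i h).2.1 this
    · rw [if_neg (by omega)]
      rw [if_pos (by omega)] at this
      exact (hs i h).1.1 this
  · rintro ⟨H, hk⟩ i h
    cases i with
    | zero => simpa using h0.2 hk
    | succ i =>
      have := H i (by omega)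
      rcases Nat.mod_two_eq_zero_or_one i with hi | hi
      · rw [if_neg (by omega)]
        rw [if_pos hi] at this
        exact (hs i (by omega)).2.2 this
      · rw [if_pos (by omega)]
        rw [if_neg (by omega)] at this
        exact (hs i (by omega)).1.2 this

lemma altCount_succ (m k : ℕ) (hk : k < m + 2) :
    altCount (m + 1) k = ((altPerms (m + 1)).filter fun τ => m - (τ 0 : ℕ) < k).card := by
  symm
  refine card_bij (fun τ _ => consPerm ⟨k, hk⟩ τ) ?_ ?_ ?_
  · intro τ hτ
    simpa [altPerms, isAltPerm_consPerm] using hτ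
  · intro τ _ τ' _ h
    ext i
    have := congrArg (fun π : Equiv.Perm _ => π i.succ) h
    simp at this
    rw [this]
  · intro π hπ
    simp only [altPerms, mem_filter, mem_univ, true_and] at hπ
    obtain ⟨τ, hτ⟩ := exists_eq_consPerm π
    have hk' : π 0 = ⟨k, hk⟩ := Fin.ext hπ.2
    rw [hk'] at hτ
    refine ⟨τ, ?_, hτ.symm⟩
    have := hπ.1
    rw [hτ, isAltPerm_consPerm] at this
    simpa [altPerms] using this

lemma altCount_entringer (m k : ℕ) (hk : k ≤ m) :
    altCount (m + 1) (k + 1) = altCount (m + 1) k + altCount m (m - k) := by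
  classical
  rw [altCount_succ _ _ (by omega), altCount_succ _ _ (by omega), altCount,
    ← card_union_of_disjoint]
  · congr 1
    ext τ
    have := (τ 0).2
    simp only [mem_filter, mem_union, ← and_or_left]
    refine and_congr_right fun _ => ?_
    omega
  · rw [disjoint_filter]
    intro τ _ h
    omega

lemma altCount_eq_leafSum (m k : ℕ) (hk : k ≤ m) :
    (altCount m k : ℤ) = leafSum m k (fun _ => 1) := by
  induction m generalizing k with
  | zero =>
    obtain rfl : k = 0 := by omega
    have : altPerms 1 = univ := by
      ext π; simp [altPerms, IsAltPerm]
    simp [altCount, this, leafSum, weightSum]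
  | succ m ihm =>
    induction k with
    | zero => rw [altCount_succ _ _ (by omega), leafSum_root]; simp
    | succ k ihk =>
      rw [altCount_entringer _ _ (by omega), leafSum_entringer _ _ (by omega), Nat.cast_add,
        ihk (by omega), ihm _ (by omega)]

lemma card_altPerm_eq_altCount (m k : ℕ) :
    Nat.card {π : Equiv.Perm (Fin (m + 1)) // IsAltPerm (m + 1) π ∧ firstEntry π = k + 1} =
      altCount m k := by
  classical
  rw [Nat.card_eq_fintype_card, Fintype.card_subtype, altCount, altPerms, filter_filter]
  congr 1
  ext π
  simp [firstEntry]

end Permutations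

/-- For all `n ≥ 1` and `k ∈ [n]`, `|A_{n,k}| = |T_{n,k}|`. -/
theorem card_altA_eq_card_treeT (n k : ℕ) (hn : 1 ≤ n) (hk1 : 1 ≤ k) (hkn : k ≤ n) :
    Nat.card {π : Equiv.Perm (Fin n) // IsAltPerm n π ∧ firstEntry π = k} =
      Nat.card {f : Fin n → Fin n // IsIncTree n f ∧ mcLeafVal f = k} := by
  obtain ⟨m, rfl⟩ := Nat.exists_eq_add_of_le' hn
  obtain ⟨j, rfl⟩ := Nat.exists_eq_add_of_le' hk1
  have h := altCount_eq_leafSum m j (by omega)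
  rw [← card_trees_eq_leafSum, ← card_altPerm_eq_altCount] at h
  exact_mod_cast h
end

section
/- For every n ≥ 1, the set A_n of alternating permutations of [n] and the set T_n of 0-1-2 increasing trees on [n] have the same cardinality: |A_n| = |T_n|. -/
namespace AltTree
open PowerSeries Finset

/-! ### The series `sec + tan` and the boustrophedon recursion -/


/-- The derivation `d/dX` on `ℚ⟦X⟧`. -/
local notation "∂" => PowerSeries.derivative (R := ℚ)

theorem deriv_sin : ∂ (sin ℚ) = cos ℚ := by
  ext n
  rw [coeff_derivative, sin, cos, coeff_mk, coeff_mk]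
  have h0 : ((n + 1).factorial : ℚ) ≠ 0 := by positivity
  have h1 : (n.factorial : ℚ) ≠ 0 := by positivity
  rcases Nat.even_or_odd n with h | h
  · obtain ⟨m, rfl⟩ := h.two_dvd
    have e : (2 * m + 1) / 2 = m := by omega
    have e' : 2 * m / 2 = m := by omega
    simp [e, e', Nat.factorial_succ]
    field_simp
  · rw [if_pos (by simpa [Nat.even_add_one] using h), if_neg (by simpa using h)]
    simp

theorem deriv_cos : ∂ (cos ℚ) = -sin ℚ := by
  ext n
  rw [coeff_derivative, map_neg, sin, cos, coeff_mk, coeff_mk]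
  have h0 : ((n + 1).factorial : ℚ) ≠ 0 := by positivity
  have h1 : (n.factorial : ℚ) ≠ 0 := by positivity
  rcases Nat.even_or_odd n with h | h
  · rw [if_pos h, if_neg (by simpa [Nat.even_add_one] using h)]
    simp
  · obtain ⟨m, rfl⟩ := h
    have e : (2 * m + 1) / 2 = m := by omega
    have e' : (2 * m + 1 + 1) / 2 = m + 1 := by omega
    simp [Nat.even_add_one, e, e', Nat.factorial_succ, pow_succ]
    field_simp

theorem constantCoeff_sin : constantCoeff (sin ℚ) = 0 := by
  rw [← coeff_zero_eq_constantCoeff_apply, sin, coeff_mk]; simp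

theorem constantCoeff_cos : constantCoeff (cos ℚ) = 1 := by
  rw [← coeff_zero_eq_constantCoeff_apply, cos, coeff_mk]; simp

theorem sin_sq_add_cos_sq : sin ℚ ^ 2 + cos ℚ ^ 2 = 1 := by
  apply derivative.ext
  · rw [map_add, Derivation.leibniz_pow, Derivation.leibniz_pow, deriv_sin, deriv_cos,
      derivative_one]
    simp only [smul_eq_mul, nsmul_eq_mul]
    push_cast
    ring
  · simp [constantCoeff_sin, constantCoeff_cos]

theorem evalNeg_deriv (f : ℚ⟦X⟧) : evalNegHom (∂ f) = -∂ (evalNegHom f) := by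
  ext n
  simp only [evalNegHom, coeff_rescale, coeff_derivative, map_neg, pow_succ]
  ring

theorem evalNeg_sin : evalNegHom (sin ℚ) = -sin ℚ := by
  ext n
  rw [evalNegHom, coeff_rescale, map_neg, sin, coeff_mk]
  split_ifs with h
  · simp
  · rw [(Nat.not_even_iff_odd.1 h).neg_one_pow]; ring

theorem evalNeg_cos : evalNegHom (cos ℚ) = cos ℚ := by
  ext n
  rw [evalNegHom, coeff_rescale, cos, coeff_mk]
  split_ifs with h
  · rw [h.neg_one_pow]; ring
  · simp

theorem evalNeg_deriv_iterate (n : ℕ) (f : ℚ⟦X⟧) :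
    evalNegHom (∂^[n] f) = (-1) ^ n * ∂^[n] (evalNegHom f) := by
  induction n generalizing f with
  | zero => simp
  | succ n ih =>
    rw [Function.iterate_succ_apply, ih, evalNeg_deriv, Function.iterate_succ_apply,
      iterate_map_neg, pow_succ]
    ring

/-- Comparing a series with its reflection `X ↦ -X` at the origin. -/
theorem constantCoeff_deriv_evalNeg (n : ℕ) (f : ℚ⟦X⟧) :
    constantCoeff (∂^[n] (evalNegHom f)) = (-1) ^ n * constantCoeff (∂^[n] f) := by
  have h := congrArg constantCoeff (evalNeg_deriv_iterate n f)
  have h2 : constantCoeff (evalNegHom (∂^[n] f)) = constantCoeff (∂^[n] f) := by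
    rw [← coeff_zero_eq_constantCoeff_apply, evalNegHom, coeff_rescale]; simp
  rw [h2] at h
  rw [h]
  simp [← mul_assoc, ← mul_pow]

/-- The secant series `1 / cos`. -/
noncomputable def secS : ℚ⟦X⟧ := (cos ℚ)⁻¹

theorem cos_mul_sec : cos ℚ * secS = 1 :=
  PowerSeries.mul_inv_cancel _ (by simp [constantCoeff_cos])

theorem constantCoeff_sec : constantCoeff secS = 1 := by
  simpa [constantCoeff_cos] using congrArg constantCoeff cos_mul_sec

theorem deriv_sec : ∂ secS = sin ℚ * secS ^ 2 := by
  rw [secS, derivative_inv', deriv_cos]; ring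

theorem evalNeg_sec : evalNegHom secS = secS := by
  have h := congrArg evalNegHom cos_mul_sec
  rw [map_mul, evalNeg_cos, map_one] at h
  calc evalNegHom secS = (cos ℚ * secS) * evalNegHom secS := by rw [cos_mul_sec, one_mul]
    _ = (cos ℚ * evalNegHom secS) * secS := by ring
    _ = secS := by rw [h, one_mul]

/-- The series `sec + tan`. -/
noncomputable def secTan : ℚ⟦X⟧ := secS * (1 + sin ℚ)

theorem deriv_secTan : ∂ secTan = secS ^ 2 * (1 + sin ℚ) := by
  rw [secTan, Derivation.leibniz, deriv_sec, map_add, derivative_one, deriv_sin]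
  simp only [smul_eq_mul]
  linear_combination secS ^ 2 * sin_sq_add_cos_sq + (-secS * cos ℚ) * cos_mul_sec

/-- `F = sec + tan` satisfies `F'' = F F'`, which follows from `2 F' = 1 + F ^ 2`. -/
theorem deriv_deriv_secTan : ∂ (∂ secTan) = secTan * ∂ secTan := by
  have h : (2 : ℚ⟦X⟧) * ∂ secTan = 1 + secTan ^ 2 := by
    rw [deriv_secTan, secTan]
    linear_combination (-secS ^ 2) * sin_sq_add_cos_sq + (cos ℚ * secS + 1) * cos_mul_sec
  have h2 := congrArg ∂ h
  rw [Derivation.leibniz, map_add, derivative_one, Derivation.leibniz_pow] at h2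
  have h3 : ∂ (2 : ℚ⟦X⟧) = 0 := by
    rw [← one_add_one_eq_two, map_add, derivative_one, add_zero]
  rw [h3] at h2
  simp only [smul_eq_mul, nsmul_eq_mul] at h2
  have h4 : (2 : ℚ⟦X⟧) ≠ 0 := fun h => by
    have h5 := congrArg constantCoeff h
    rw [map_ofNat, map_zero] at h5
    exact two_ne_zero h5
  apply mul_left_cancel₀ h4
  push_cast at h2
  linear_combination h2

theorem constantCoeff_secTan : constantCoeff secTan = 1 := by
  simp [secTan, constantCoeff_sec, constantCoeff_sin]

theorem constantCoeff_deriv_secTan : constantCoeff (∂ secTan) = 1 := by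
  simp [deriv_secTan, constantCoeff_sec, constantCoeff_sin]

/-- The mixed partial derivative `∂ₓᵐ ∂ᵧⁿ` at the origin of
`(cos x + sin x) / cos (x + y)`, written with univariate series only. -/
noncomputable def seidel (m n : ℕ) : ℚ :=
  constantCoeff (∂^[m] ((cos ℚ + sin ℚ) * ∂^[n] secS))

/-- Differentiating the factor `cos x + sin x` in `x` amounts to reflecting it, and the reflection
contributes only a sign at the origin. -/
theorem seidel_succ (m n : ℕ) :
    seidel (m + 1) n = seidel m (n + 1) + (-1) ^ (m + n) * seidel m n := by
  have hneg : evalNegHom ((cos ℚ + sin ℚ) * ∂^[n] secS) =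
      (-1) ^ n * ((cos ℚ - sin ℚ) * ∂^[n] secS) := by
    rw [map_mul, map_add, evalNeg_cos, evalNeg_sin, evalNeg_deriv_iterate, evalNeg_sec]
    ring
  have hd : ∂ ((cos ℚ + sin ℚ) * ∂^[n] secS) = (cos ℚ + sin ℚ) * ∂^[n + 1] secS
      + (-1) ^ n * evalNegHom ((cos ℚ + sin ℚ) * ∂^[n] secS) := by
    rw [hneg, Derivation.leibniz, map_add, deriv_sin, deriv_cos, Function.iterate_succ_apply',
      ← mul_assoc, ← mul_pow]
    simp only [smul_eq_mul]
    norm_num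
    ring
  have hs : ∀ f : ℚ⟦X⟧, ∂^[m] ((-1) ^ n * f) = (-1) ^ n * ∂^[m] f := by
    intro f
    rcases neg_one_pow_eq_or ℚ⟦X⟧ n with h | h <;> simp [h, iterate_map_neg]
  rw [seidel, Function.iterate_succ_apply, hd, iterate_map_add, hs, map_add, map_mul,
    constantCoeff_deriv_evalNeg, seidel, seidel, map_pow, map_neg, map_one]
  ring

theorem seidel_zero_right (m : ℕ) (hm : m ≠ 0) :
    seidel m 0 = constantCoeff (∂^[m] (sin ℚ * secS)) := by
  obtain ⟨k, rfl⟩ := Nat.exists_eq_succ_of_ne_zero hm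
  have : (cos ℚ + sin ℚ) * secS = 1 + sin ℚ * secS := by rw [add_mul, cos_mul_sec]
  rw [seidel, Function.iterate_zero_apply, this, iterate_map_add, Function.iterate_succ_apply ∂ k 1,
    derivative_one, iterate_map_zero, zero_add]

theorem seidel_zero_left (n : ℕ) : seidel 0 n = constantCoeff (∂^[n] secS) := by
  simp [seidel, constantCoeff_cos, constantCoeff_sin]

theorem deriv_sec_odd (n : ℕ) (hn : Odd n) : constantCoeff (∂^[n] secS) = 0 := by
  have h := constantCoeff_deriv_evalNeg n secS
  rw [evalNeg_sec, hn.neg_one_pow] at h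
  linarith

theorem deriv_tan_even (n : ℕ) (hn : Even n) : constantCoeff (∂^[n] (sin ℚ * secS)) = 0 := by
  have h := constantCoeff_deriv_evalNeg n (sin ℚ * secS)
  rw [map_mul, evalNeg_sec, evalNeg_sin, hn.neg_one_pow, neg_mul, iterate_map_neg, map_neg] at h
  linarith

theorem deriv_iterate_secTan (n : ℕ) : constantCoeff (∂^[n] secTan) =
    constantCoeff (∂^[n] secS) + constantCoeff (∂^[n] (sin ℚ * secS)) := by
  rw [← map_add, ← iterate_map_add]; congr 2; rw [secTan]; ring

/-- Any array obeying the boustrophedon recursion ends its rows with the derivatives of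
`sec + tan` at the origin. -/
theorem boustrophedon (A : ℕ → ℕ → ℕ) (h00 : A 0 0 = 1) (h0 : ∀ n, A (n + 1) 0 = 0)
    (hs : ∀ n k, k ≤ n → A (n + 1) (k + 1) = A (n + 1) k + A n (n - k)) (n : ℕ) :
    (A n n : ℚ) = constantCoeff (∂^[n] secTan) := by
  -- The two indices of `seidel` swap with the parity of the row, since rows are read back and forth.
  have key : ∀ n k, k ≤ n →
      (A n k : ℚ) = if Odd n then seidel k (n - k) else seidel (n - k) k := by
    intro n
    induction n with
    | zero =>
      intro k hk
      obtain rfl : k = 0 := by omega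
      simp [h00, seidel_zero_left, constantCoeff_sec]
    | succ n ihn =>
      intro k
      induction k with
      | zero =>
        intro _
        rw [h0]
        split_ifs with h
        · rw [seidel_zero_left, Nat.sub_zero, deriv_sec_odd _ h, Nat.cast_zero]
        · rw [Nat.sub_zero, seidel_zero_right _ (by omega),
            deriv_tan_even _ (Nat.not_odd_iff_even.1 h), Nat.cast_zero]
      | succ k ihk =>
        intro hk
        have hk' : k ≤ n := by omega
        obtain ⟨d, rfl⟩ := Nat.exists_eq_add_of_le hk'
        rw [hs _ _ hk', Nat.cast_add, ihk (by omega), ihn _ (Nat.sub_le _ _)]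
        have e1 : k + d + 1 - k = d + 1 := by omega
        have e2 : k + d - (k + d - k) = k := by omega
        have e3 : k + d - k = d := by omega
        have e4 : k + d + 1 - (k + 1) = d := by omega
        rw [e1, e2, e3, e4]
        by_cases h : Odd (k + d)
        · have h' : ¬ Odd (k + d + 1) := by simpa [Nat.odd_add_one] using h
          rw [if_pos h, if_neg h', if_neg h', seidel_succ, add_comm d k, h.neg_one_pow]
          ring
        · have h' : Odd (k + d + 1) := by simpa [Nat.odd_add_one] using h
          rw [if_neg h, if_pos h', if_pos h', seidel_succ,
            (Nat.not_odd_iff_even.1 h).neg_one_pow]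
          ring
  rw [key n n le_rfl, deriv_iterate_secTan, Nat.sub_self]
  split_ifs with h
  · rw [seidel_zero_right _ h.pos.ne', deriv_sec_odd n h, zero_add]
  · rw [seidel_zero_left, deriv_tan_even n (Nat.not_odd_iff_even.1 h), add_zero]

/-! ### Alternating permutations -/


/-- The permutation with first entry `k` whose remaining entries are order-isomorphic to `σ`. -/
def consPerm {n : ℕ} (p : Fin (n + 1) × Equiv.Perm (Fin n)) : Equiv.Perm (Fin (n + 1)) :=
  (finSuccEquiv n).trans ((Equiv.optionCongr p.2).trans (finSuccEquiv' p.1).symm)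

theorem consPerm_zero {n : ℕ} (p : Fin (n + 1) × Equiv.Perm (Fin n)) : consPerm p 0 = p.1 := by
  simp [consPerm]

theorem consPerm_succ {n : ℕ} (p : Fin (n + 1) × Equiv.Perm (Fin n)) (i : Fin n) :
    consPerm p i.succ = p.1.succAbove (p.2 i) := by
  simp [consPerm]

theorem consPerm_bijective (n : ℕ) : Function.Bijective (consPerm (n := n)) := by
  rw [Fintype.bijective_iff_injective_and_card]
  constructor
  · rintro ⟨k, σ⟩ ⟨l, τ⟩ h
    have h0 : k = l := by simpa [consPerm_zero] using congrArg (fun π => π 0) h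
    subst h0
    congr 1
    ext1 i
    have h1 := congrArg (fun π => π i.succ) h
    simpa [consPerm_succ] using h1
  · simp [Fintype.card_perm, Nat.factorial_succ]

/-- Deleting the first entry shifts positions by one, so the remaining entries alternate up-down;
complementing them by `Fin.revPerm` makes them down-up again. -/
theorem isAltPerm_consPerm {n : ℕ} (k : Fin (n + 2)) (σ : Equiv.Perm (Fin (n + 1))) :
    IsAltPerm (n + 2) (consPerm (k, σ)) ↔
      (σ 0 : ℕ) < k ∧ IsAltPerm (n + 1) (σ.trans Fin.revPerm) := by
  have hs : ∀ i (h : i + 1 < n + 2),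
      consPerm (k, σ) ⟨i + 1, h⟩ = k.succAbove (σ ⟨i, by omega⟩) :=
    fun i h => consPerm_succ (k, σ) ⟨i, by omega⟩
  have h00 : consPerm (k, σ) ⟨0, by omega⟩ = k := consPerm_zero (k, σ)
  constructor
  · intro h
    refine ⟨?_, fun i hi => ?_⟩
    · have := h 0 (by omega)
      rw [if_pos rfl, hs, h00, Fin.succAbove_lt_iff_castSucc_lt] at this
      exact this
    · have := h (i + 1) (by omega)
      rw [hs, hs, (Fin.strictMono_succAbove k).lt_iff_lt, (Fin.strictMono_succAbove k).lt_iff_lt]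
        at this
      simp only [Equiv.trans_apply, Fin.revPerm_apply, Fin.rev_lt_rev]
      rcases Nat.mod_two_eq_zero_or_one i with h2 | h2
      · rw [if_pos h2]; rw [if_neg (by omega)] at this; exact this
      · rw [if_neg (by omega)]; rw [if_pos (by omega)] at this; exact this
  · rintro ⟨h0, h⟩ i hi
    rcases i with _ | i
    · rw [if_pos rfl, hs, h00, Fin.succAbove_lt_iff_castSucc_lt]
      exact h0
    · have := h i (by omega)
      rw [hs, hs, (Fin.strictMono_succAbove k).lt_iff_lt, (Fin.strictMono_succAbove k).lt_iff_lt]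
      simp only [Equiv.trans_apply, Fin.revPerm_apply, Fin.rev_lt_rev] at this
      rcases Nat.mod_two_eq_zero_or_one i with h2 | h2
      · rw [if_pos h2] at this; rw [if_neg (by omega)]; exact this
      · rw [if_neg (by omega)] at this; rw [if_pos (by omega)]; exact this

open Classical in
/-- The Entringer number: how many alternating permutations of `Fin (n + 1)` start with `k`. -/
noncomputable def ent (n k : ℕ) : ℕ :=
  #{π : Equiv.Perm (Fin (n + 1)) | IsAltPerm (n + 1) π ∧ (π 0 : ℕ) = k}

open Classical in
/-- Deleting the first entry and complementing the others. -/
theorem ent_succ (n k : ℕ) (hk : k ≤ n + 1) :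
    ent (n + 1) k =
      #{σ : Equiv.Perm (Fin (n + 1)) | IsAltPerm (n + 1) σ ∧ ((σ 0).rev : ℕ) < k} := by
  symm
  have hrev : ∀ σ : Equiv.Perm (Fin (n + 1)), (σ.trans Fin.revPerm).trans Fin.revPerm = σ := by
    intro σ; ext i; simp
  refine card_bij (fun σ _ => consPerm (⟨k, by omega⟩, σ.trans Fin.revPerm)) ?_ ?_ ?_
  · intro σ hσ
    rw [mem_filter] at hσ ⊢
    refine ⟨mem_univ _, ?_, ?_⟩
    · rw [isAltPerm_consPerm, hrev]
      exact ⟨hσ.2.2, hσ.2.1⟩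
    · rw [consPerm_zero]
  · intro σ _ τ _ h
    have := (consPerm_bijective (n + 1)).1 h
    have h2 : σ.trans Fin.revPerm = τ.trans Fin.revPerm := congrArg Prod.snd this
    rw [← hrev σ, h2, hrev]
  · intro π hπ
    rw [mem_filter] at hπ
    obtain ⟨⟨l, σ⟩, rfl⟩ := (consPerm_bijective (n + 1)).2 π
    obtain ⟨-, h1, h2⟩ := hπ
    rw [consPerm_zero] at h2
    change (l : ℕ) = k at h2
    rw [isAltPerm_consPerm] at h1
    refine ⟨σ.trans Fin.revPerm, ?_, ?_⟩
    · rw [mem_filter]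
      refine ⟨mem_univ _, h1.2, ?_⟩
      have := h1.1
      simp only [Equiv.trans_apply, Fin.revPerm_apply, Fin.rev_rev]
      omega
    · rw [hrev]
      congr 2
      exact Fin.ext h2.symm

theorem ent_zero_zero : ent 0 0 = 1 := by
  classical
  rw [ent, filter_true_of_mem, card_univ, Fintype.card_perm, Fintype.card_fin]
  · rfl
  · intro π _
    exact ⟨fun i h => absurd h (by omega), by omega⟩

theorem ent_succ_zero (n : ℕ) : ent (n + 1) 0 = 0 := by
  rw [ent_succ n 0 (by omega)]; simp

theorem ent_succ_succ (n k : ℕ) (hk : k ≤ n) :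
    ent (n + 1) (k + 1) = ent (n + 1) k + ent n (n - k) := by
  classical
  rw [ent_succ _ _ (by omega), ent_succ _ _ (by omega), ent, ← card_union_of_disjoint]
  · congr 1
    ext σ
    simp only [mem_filter, mem_union, mem_univ, true_and, ← and_or_left, Fin.val_rev]
    refine and_congr_right fun _ => ?_
    have := (σ 0).isLt
    omega
  · rw [disjoint_filter]
    rintro σ - ⟨_, h⟩ ⟨_, h'⟩
    rw [Fin.val_rev] at h
    omega

/-- Every alternating permutation of `Fin (n + 1)` extends uniquely to one of `Fin (n + 2)`
starting with the maximum (up to complementing), so the last Entringer number in row `n + 1`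
counts them all. -/
theorem card_alt (n : ℕ) :
    Nat.card {π : Equiv.Perm (Fin (n + 1)) // IsAltPerm (n + 1) π} = ent (n + 1) (n + 1) := by
  classical
  rw [ent_succ _ _ le_rfl, Nat.card_eq_fintype_card, Fintype.card_subtype]
  congr 1
  ext σ
  simp only [mem_filter, mem_univ, true_and, (σ 0).rev.isLt, and_true]

/-! ### Increasing trees -/

/-- Increasing trees on `{0, …, n}` without any bound on the number of children: `g i` is the
parent of the vertex `i + 1`. -/
abbrev Rec (n : ℕ) : Type := (i : Fin n) → Fin ((i : ℕ) + 1)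

/-- The number of children of the vertex `j`. -/
def kids {n : ℕ} (g : Rec n) (j : ℕ) : ℕ := #{i : Fin n | (g i : ℕ) = j}

/-- The weight of a vertex with the given number of children. -/
noncomputable def wt : ℕ → ℚ⟦X⟧
  | 0 => ∂ secTan
  | 1 => secTan
  | 2 => 1
  | _ => 0

/-- Differentiating the weight of a vertex gives it one more child, which is a new leaf. -/
theorem deriv_wt (c : ℕ) : ∂ (wt c) = wt (c + 1) * wt 0 := by
  match c with
  | 0 => exact deriv_deriv_secTan
  | 1 => simp [wt]
  | 2 => simp [wt]
  | c + 3 => simp [wt]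

theorem constantCoeff_wt (c : ℕ) : constantCoeff (wt c) = if c ≤ 2 then 1 else 0 := by
  match c with
  | 0 => simp [wt, constantCoeff_deriv_secTan]
  | 1 => simp [wt, constantCoeff_secTan]
  | 2 => simp [wt]
  | c + 3 => simp [wt]

/-- The total weight of all increasing trees on `{0, …, n}`, a tree being weighted by the product
of the weights of its vertices. -/
noncomputable def treeSum (n : ℕ) : ℚ⟦X⟧ := ∑ g : Rec n, ∏ j : Fin (n + 1), wt (kids g j)

theorem deriv_prod {ι : Type*} [DecidableEq ι] (s : Finset ι) (f : ι → ℚ⟦X⟧) :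
    ∂ (∏ j ∈ s, f j) = ∑ k ∈ s, ∏ j ∈ s, if k = j then ∂ (f j) else f j := by
  induction s using Finset.induction_on with
  | empty => simp
  | insert a s ha ih =>
    rw [prod_insert ha, Derivation.leibniz, ih, sum_insert ha, prod_insert ha, if_pos rfl]
    have h1 : (∏ j ∈ s, if a = j then ∂ (f j) else f j) = ∏ j ∈ s, f j :=
      prod_congr rfl fun j hj => if_neg (by rintro rfl; exact ha hj)
    have h2 : ∀ k ∈ s, (∏ j ∈ insert a s, if k = j then ∂ (f j) else f j) =
        f a * ∏ j ∈ s, if k = j then ∂ (f j) else f j := fun k hk => by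
      rw [prod_insert ha, if_neg (by rintro rfl; exact ha hk)]
    rw [h1, sum_congr rfl h2, ← mul_sum]
    simp only [smul_eq_mul]
    ring

/-- Adding the vertex `n + 1` as a child of the vertex `k`. -/
def addLeaf (n : ℕ) : Fin (n + 1) × Rec n ≃ Rec (n + 1) :=
  Fin.snocEquiv (fun i : Fin (n + 1) => Fin ((i : ℕ) + 1))

theorem addLeaf_castSucc {n : ℕ} (k : Fin (n + 1)) (g : Rec n) (i : Fin n) :
    (addLeaf n (k, g) i.castSucc : ℕ) = g i :=
  congrArg Fin.val (Fin.snoc_castSucc (α := fun i : Fin (n + 1) => Fin ((i : ℕ) + 1)) k g i)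

theorem addLeaf_last {n : ℕ} (k : Fin (n + 1)) (g : Rec n) :
    (addLeaf n (k, g) (Fin.last n) : ℕ) = k :=
  congrArg Fin.val (Fin.snoc_last (α := fun i : Fin (n + 1) => Fin ((i : ℕ) + 1)) k g)

theorem kids_addLeaf {n : ℕ} (k : Fin (n + 1)) (g : Rec n) (j : ℕ) :
    kids (addLeaf n (k, g)) j = kids g j + if (k : ℕ) = j then 1 else 0 := by
  rw [kids, kids, card_filter, card_filter, Fin.sum_univ_castSucc, addLeaf_last]
  simp only [addLeaf_castSucc]

theorem kids_eq_zero {n : ℕ} (g : Rec n) (j : ℕ) (h : n ≤ j) : kids g j = 0 := by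
  rw [kids, card_eq_zero, filter_eq_empty_iff]
  intro i _
  have := (g i).isLt
  omega

theorem prod_addLeaf {n : ℕ} (k : Fin (n + 1)) (g : Rec n) :
    ∏ j : Fin (n + 2), wt (kids (addLeaf n (k, g)) j) =
      ∏ j : Fin (n + 1), if k = j then ∂ (wt (kids g j)) else wt (kids g j) := by
  have hlast : wt (kids (addLeaf n (k, g)) (n + 1)) = wt 0 := by
    rw [kids_addLeaf, if_neg k.isLt.ne, kids_eq_zero g _ (by omega)]
  have hrest : ∏ j ∈ univ.erase k, wt (kids (addLeaf n (k, g)) j) =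
      ∏ j ∈ univ.erase k, if k = j then ∂ (wt (kids g j)) else wt (kids g j) := by
    refine prod_congr rfl fun j hj => ?_
    have hne : k ≠ j := (ne_of_mem_erase hj).symm
    rw [kids_addLeaf, if_neg hne, if_neg (fun h => hne (Fin.ext h)), add_zero]
  rw [Fin.prod_univ_castSucc, Fin.val_last, hlast]
  simp only [Fin.val_castSucc]
  rw [← mul_prod_erase univ (fun j : Fin (n + 1) => wt (kids (addLeaf n (k, g)) j)) (mem_univ k),
    ← mul_prod_erase univ (fun j : Fin (n + 1) => if k = j then ∂ (wt (kids g j)) else wt (kids g j))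
      (mem_univ k), hrest, if_pos rfl, deriv_wt, kids_addLeaf, if_pos rfl]
  ring

/-- By the product rule, differentiating `treeSum n` attaches a new leaf in all possible ways. -/
theorem treeSum_succ (n : ℕ) : treeSum (n + 1) = ∂ (treeSum n) := by
  rw [treeSum, treeSum, map_sum, ← (addLeaf n).sum_comp, Fintype.sum_prod_type, sum_comm]
  refine sum_congr rfl fun g _ => ?_
  rw [deriv_prod]
  exact sum_congr rfl fun k _ => prod_addLeaf k g

theorem treeSum_eq (n : ℕ) : treeSum n = ∂^[n + 1] secTan := by
  induction n with
  | zero => simp [treeSum, kids_eq_zero, wt]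
  | succ n ih => rw [treeSum_succ, ih, ← Function.iterate_succ_apply' ∂]

theorem constantCoeff_treeSum (n : ℕ) :
    constantCoeff (treeSum n) = #{g : Rec n | ∀ j : Fin (n + 1), kids g j ≤ 2} := by
  rw [treeSum, map_sum, card_filter, Nat.cast_sum]
  refine sum_congr rfl fun g _ => ?_
  rw [map_prod]
  simp only [constantCoeff_wt, prod_ite_zero, prod_const_one, mem_univ, true_imp_iff]
  push_cast
  rfl

theorem card_tree (n : ℕ) : Nat.card {f : Fin (n + 1) → Fin (n + 1) // IsIncTree (n + 1) f} =
    #{g : Rec n | ∀ j : Fin (n + 1), kids g j ≤ 2} := by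
  classical
  rw [Nat.card_eq_fintype_card, Fintype.card_subtype]
  symm
  -- `φ` turns a parent sequence into a parent function fixing the root.
  let φ : Rec n → Fin (n + 1) → Fin (n + 1) := fun g =>
    Fin.cases 0 fun i => ⟨g i, by have := (g i).isLt; omega⟩
  have hφ0 : ∀ g, φ g 0 = 0 := fun g => rfl
  have hφs : ∀ g i, (φ g i.succ : ℕ) = g i := fun g i => rfl
  have hk : ∀ g (j : Fin (n + 1)),
      #{i : Fin (n + 1) | (i : ℕ) ≠ 0 ∧ φ g i = j} = kids g j := by
    intro g j
    rw [Fin.card_filter_univ_succ, if_neg (by simp), kids]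
    congr 1
    ext i
    simp [Fin.ext_iff, hφs]
  refine card_bij (fun g _ => φ g) ?_ ?_ ?_
  · intro g hg
    rw [mem_filter] at hg ⊢
    refine ⟨mem_univ _, ?_, ?_, fun j => ?_⟩
    · intro i hi
      obtain rfl : i = 0 := Fin.ext hi
      exact hφ0 g
    · intro i hi
      obtain ⟨i, rfl⟩ := Fin.exists_succ_eq.2 (fun h => hi (congrArg Fin.val h))
      rw [hφs]
      exact (g i).isLt
    · rw [hk]
      exact hg.2 j
  · intro g _ g' _ h
    ext i
    rw [← hφs, ← hφs, h]
  · intro f hf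
    rw [mem_filter] at hf
    obtain ⟨-, h0, hlt, h2⟩ := hf
    let g : Rec n := fun i => ⟨f i.succ, hlt i.succ (Nat.succ_ne_zero _)⟩
    have hg : φ g = f := by
      funext i
      refine Fin.cases ?_ (fun i => ?_) i
      · rw [hφ0, h0 0 rfl]
      · exact Fin.ext (hφs g i)
    refine ⟨g, ?_, hg⟩
    rw [mem_filter]
    refine ⟨mem_univ _, fun j => ?_⟩
    rw [← hk, hg]
    exact h2 j

end AltTree

/-- For every `n ≥ 1`, `|A_n| = |T_n|`. -/
theorem card_alt_eq_card_incTree (n : ℕ) (hn : 1 ≤ n) :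
    Nat.card {π : Equiv.Perm (Fin n) // IsAltPerm n π} =
      Nat.card {f : Fin n → Fin n // IsIncTree n f} := by
  obtain ⟨m, rfl⟩ := Nat.exists_eq_add_of_le' hn
  rw [AltTree.card_alt, AltTree.card_tree]
  have h := AltTree.boustrophedon AltTree.ent AltTree.ent_zero_zero AltTree.ent_succ_zero
    AltTree.ent_succ_succ (m + 1)
  rw [← AltTree.treeSum_eq, AltTree.constantCoeff_treeSum] at h
  exact_mod_cast h
end

section
/- Let a_{n,k} = |A_{n,k}|. For all n ≥ 3 and all k with 2 ≤ k ≤ n, a_{n,k} = a_{n,k-1} + Σ_{i=k+1}^{n} a_{n-2,i-2}. -/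
/-- `a_{n,k} = |A_{n,k}|`. -/
noncomputable def altA (n k : ℕ) : ℕ :=
  Nat.card {π : Equiv.Perm (Fin n) // IsAltPerm n π ∧ firstEntry π = k}

/-- The permutation of `Fin (m + 1)` with first value `p` whose remaining values, after
order-preserving relabelling by `Fin m`, form the complement of `τ`. -/
noncomputable def insertFirst {m : ℕ} (p : Fin (m + 1)) (τ : Equiv.Perm (Fin m)) :
    Equiv.Perm (Fin (m + 1)) :=
  Equiv.ofBijective (Fin.cons p (fun i => p.succAbove (Fin.rev (τ i))) : Fin (m + 1) → Fin (m + 1))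
    (Finite.injective_iff_bijective.mp (by
      rw [Fin.cons_injective_iff]
      refine ⟨?_, fun i j h => ?_⟩
      · rintro ⟨i, hi⟩
        exact Fin.succAbove_ne _ _ hi
      · exact τ.injective (Fin.rev_injective (Fin.succAbove_right_injective h))))

lemma insertFirst_zero {m : ℕ} (p : Fin (m + 1)) (τ : Equiv.Perm (Fin m)) :
    insertFirst p τ 0 = p := by
  simp [insertFirst]

lemma insertFirst_succ {m : ℕ} (p : Fin (m + 1)) (τ : Equiv.Perm (Fin m)) (i : Fin m) :
    insertFirst p τ i.succ = p.succAbove (Fin.rev (τ i)) := by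
  simp [insertFirst]

lemma insertFirst_injective {m : ℕ} (p : Fin (m + 1)) :
    Function.Injective (insertFirst p) := by
  intro σ τ h
  ext i
  have h1 := congrArg (fun π : Equiv.Perm (Fin (m + 1)) => π i.succ) h
  simp only [insertFirst_succ] at h1
  rw [Fin.rev_injective (Fin.succAbove_right_injective h1)]

lemma exists_insertFirst {m : ℕ} (π : Equiv.Perm (Fin (m + 1))) :
    ∃ τ, insertFirst (π 0) τ = π := by
  have hne : ∀ i : Fin m, ∃ y, (π 0).succAbove y = π i.succ := fun i =>
    Fin.exists_succAbove_eq (fun h => Fin.succ_ne_zero i (π.injective h))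
  choose f hf using hne
  have hinj : Function.Injective (fun i => Fin.rev (f i)) := by
    intro i j h
    have h1 : f i = f j := Fin.rev_injective h
    have h2 : π i.succ = π j.succ := by rw [← hf, ← hf, h1]
    exact Fin.succ_injective _ (π.injective h2)
  refine ⟨Equiv.ofBijective _ (Finite.injective_iff_bijective.mp hinj), ?_⟩
  ext i
  refine Fin.cases ?_ (fun j => ?_) i
  · rw [insertFirst_zero]
  · rw [insertFirst_succ]
    simp [hf]

/-- Deleting the first entry turns down-up into up-down, which complementation turns back into
down-up; the only condition linking `p` to `τ` is the initial descent. -/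
lemma isAltPerm_insertFirst {m : ℕ} (hm : 0 < m) (p : Fin (m + 1)) (τ : Equiv.Perm (Fin m)) :
    IsAltPerm (m + 1) (insertFirst p τ) ↔
      IsAltPerm m τ ∧ m + 1 < (p : ℕ) + 1 + firstEntry τ := by
  have hs : ∀ j (h : j < m), insertFirst p τ ⟨j + 1, Nat.succ_lt_succ h⟩ =
      p.succAbove (Fin.rev (τ ⟨j, h⟩)) := fun j h => insertFirst_succ p τ ⟨j, h⟩
  have h0 : insertFirst p τ ⟨0, Nat.succ_pos m⟩ = p := insertFirst_zero p τ
  have hfirst : insertFirst p τ ⟨0 + 1, Nat.succ_lt_succ hm⟩ < insertFirst p τ ⟨0, Nat.succ_pos m⟩ ↔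
      m + 1 < (p : ℕ) + 1 + firstEntry τ := by
    rw [h0, hs 0 hm, Fin.succAbove_lt_iff_castSucc_lt, Fin.lt_def]
    have := (τ ⟨0, hm⟩).isLt
    simp only [firstEntry, hm, dif_pos, Fin.val_castSucc, Fin.val_rev]
    omega
  have hstep : ∀ j (h : j + 1 < m),
      ((if (j + 1) % 2 = 0 then
          insertFirst p τ ⟨j + 1 + 1, Nat.succ_lt_succ h⟩ <
            insertFirst p τ ⟨j + 1, Nat.succ_lt_succ (Nat.lt_of_succ_lt h)⟩
        else insertFirst p τ ⟨j + 1, Nat.succ_lt_succ (Nat.lt_of_succ_lt h)⟩ <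
            insertFirst p τ ⟨j + 1 + 1, Nat.succ_lt_succ h⟩) ↔
      (if j % 2 = 0 then τ ⟨j + 1, h⟩ < τ ⟨j, Nat.lt_of_succ_lt h⟩
        else τ ⟨j, Nat.lt_of_succ_lt h⟩ < τ ⟨j + 1, h⟩)) := by
    intro j h
    rw [hs (j + 1) h, hs j (Nat.lt_of_succ_lt h)]
    simp only [Fin.succAbove_lt_succAbove_iff, Fin.rev_lt_rev]
    rcases Nat.mod_two_eq_zero_or_one j with hj | hj
    · rw [if_neg (by omega), if_pos hj]
    · rw [if_pos (by omega), if_neg (by omega)]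
  constructor
  · intro H
    refine ⟨fun j h => (hstep j h).mp (H (j + 1) (Nat.succ_lt_succ h)), hfirst.mp ?_⟩
    simpa using H 0 (Nat.succ_lt_succ hm)
  · rintro ⟨H, hp⟩ i hi
    cases i with
    | zero => simpa using hfirst.mpr hp
    | succ j => exact (hstep j (Nat.lt_of_succ_lt_succ hi)).mpr (H j (Nat.lt_of_succ_lt_succ hi))

lemma altA_succ_eq_card {m k : ℕ} (hm : 0 < m) (hk : 1 ≤ k) (hkm : k ≤ m + 1) :
    altA (m + 1) k =
      Nat.card {τ : Equiv.Perm (Fin m) // IsAltPerm m τ ∧ m + 1 < k + firstEntry τ} := by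
  obtain ⟨p, rfl⟩ : ∃ p : Fin (m + 1), (p : ℕ) + 1 = k := ⟨⟨k - 1, by omega⟩, by simp; omega⟩
  have hfe : ∀ π : Equiv.Perm (Fin (m + 1)), firstEntry π = (π 0 : ℕ) + 1 := fun π => by
    simp [firstEntry]
  symm
  refine Nat.card_eq_of_bijective (fun τ => ⟨insertFirst p τ.1,
    (isAltPerm_insertFirst hm p τ.1).mpr τ.2, by rw [hfe, insertFirst_zero]⟩) ⟨?_, ?_⟩
  · intro σ τ h
    exact Subtype.ext (insertFirst_injective p (congrArg Subtype.val h))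
  · rintro ⟨π, hπ, hπk⟩
    have hp : π 0 = p := by
      rw [hfe] at hπk
      exact Fin.ext (by omega)
    obtain ⟨τ, hτ⟩ := exists_insertFirst π
    rw [hp] at hτ
    exact ⟨⟨τ, (isAltPerm_insertFirst hm p τ).mp (hτ ▸ hπ)⟩, Subtype.ext hτ⟩

lemma altA_succ_eq_sum {m k : ℕ} (hm : 0 < m) (hk : 1 ≤ k) (hkm : k ≤ m + 1) :
    altA (m + 1) k = ∑ j ∈ Finset.Icc (m + 2 - k) m, altA m j := by
  classical
  have hle : ∀ τ : Equiv.Perm (Fin m), firstEntry τ ≤ m := fun τ => by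
    have := (τ ⟨0, hm⟩).isLt
    simp only [firstEntry, hm, dif_pos]
    omega
  rw [altA_succ_eq_card hm hk hkm, Nat.card_eq_fintype_card, Fintype.card_subtype,
    Finset.card_eq_sum_card_fiberwise (f := firstEntry) (t := Finset.Icc (m + 2 - k) m)]
  · refine Finset.sum_congr rfl fun j hj => ?_
    rw [altA, Nat.card_eq_fintype_card, Fintype.card_subtype, Finset.filter_filter]
    congr 1
    ext τ
    simp only [Finset.mem_filter, Finset.mem_univ, true_and]
    rw [Finset.mem_Icc] at hj
    constructor
    · rintro ⟨⟨h, -⟩, h'⟩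
      exact ⟨h, h'⟩
    · rintro ⟨h, h'⟩
      exact ⟨⟨h, by omega⟩, h'⟩
  · intro τ hτ
    simp only [Finset.coe_filter, Finset.mem_univ, true_and, Set.mem_ofPred_eq] at hτ
    have := hle τ
    simp only [Finset.coe_Icc, Set.mem_Icc]
    omega

/-- For `n ≥ 3` and `2 ≤ k ≤ n`, `a_{n,k} = a_{n,k-1} + Σ_{i=k+1}^n a_{n-2,i-2}`. -/
theorem altA_recurrence (n k : ℕ) (hn : 3 ≤ n) (hk2 : 2 ≤ k) (hkn : k ≤ n) :
    altA n k = altA n (k - 1) + ∑ i ∈ Finset.Icc (k + 1) n, altA (n - 2) (i - 2) := by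
  obtain ⟨m, rfl⟩ : ∃ m, n = m + 1 + 1 := ⟨n - 2, by omega⟩
  have hsum : ∑ i ∈ Finset.Icc (k + 1) (m + 1 + 1), altA (m + 1 + 1 - 2) (i - 2) =
      altA (m + 1) (m + 3 - k) := by
    rw [altA_succ_eq_sum (by omega) (by omega) (by omega)]
    refine Finset.sum_nbij' (fun i => i - 2) (fun j => j + 2) ?_ ?_ ?_ ?_ ?_
    all_goals
      intro i hi
      simp only [Finset.mem_Icc] at hi ⊢
    · omega
    · omega
    · omega
    · omega
    · rfl
  rw [hsum, altA_succ_eq_sum (by omega) (by omega) hkn,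
    altA_succ_eq_sum (k := k - 1) (by omega) (by omega) (by omega),
    show m + 1 + 2 - (k - 1) = (m + 3 - k) + 1 by omega, show m + 1 + 2 - k = m + 3 - k by omega,
    ← Finset.add_sum_Ioc_eq_sum_Icc (by omega : m + 3 - k ≤ m + 1), add_comm]
  congr 2
  ext j
  simp only [Finset.mem_Ioc, Finset.mem_Icc, Nat.succ_le_iff]
end

section
/- For all n ≥ 3 and all k with 2 ≤ k ≤ n, there is a bijection between A_{n,k} and the disjoint union of A_{n,k-1} with the disjoint union over i = k+1, …, n of the sets A_{n-2,i-2}. -/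
/-- The strictly increasing map `Fin m → Fin (m + 2)` which, for `c ≤ m`, omits exactly the values
`c` and `c + 1`. -/
def skipTwo (m c : ℕ) (v : Fin m) : Fin (m + 2) :=
  if (v : ℕ) < c then ⟨v, by omega⟩ else ⟨v + 2, by omega⟩

lemma skipTwo_val (m c : ℕ) (v : Fin m) :
    (skipTwo m c v : ℕ) = if (v : ℕ) < c then (v : ℕ) else v + 2 := by
  unfold skipTwo; split_ifs <;> rfl

lemma skipTwo_lt_iff {m c : ℕ} {v w : Fin m} : skipTwo m c v < skipTwo m c w ↔ v < w := by
  simp only [Fin.lt_def, skipTwo_val]; split_ifs <;> omega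

lemma skipTwo_injective (m c : ℕ) : Function.Injective (skipTwo m c) := by
  intro v w h
  have h' := congrArg Fin.val h
  simp only [skipTwo_val] at h'
  ext
  split_ifs at h' <;> omega

lemma exists_skipTwo {m c : ℕ} (hc : c ≤ m) (x : Fin (m + 2)) (h1 : (x : ℕ) ≠ c)
    (h2 : (x : ℕ) ≠ c + 1) : ∃ v, skipTwo m c v = x := by
  by_cases h : (x : ℕ) < c
  · exact ⟨⟨x, by omega⟩, by ext; simp [skipTwo_val, h]⟩
  · refine ⟨⟨x - 2, by omega⟩, ?_⟩
    ext
    simp only [skipTwo_val]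
    split_ifs <;> omega

/-- The word `c + 1, c` followed by the letters of `σ`, relabelled to avoid `c` and `c + 1`. -/
def insertTwoFun {m c : ℕ} (hc : c ≤ m) (σ : Fin m → Fin m) : Fin (m + 2) → Fin (m + 2) :=
  Fin.cons ⟨c + 1, by omega⟩ (Fin.cons ⟨c, by omega⟩ (skipTwo m c ∘ σ))

lemma insertTwoFun_injective {m c : ℕ} (hc : c ≤ m) {σ : Fin m → Fin m}
    (hσ : Function.Injective σ) : Function.Injective (insertTwoFun hc σ) := by
  unfold insertTwoFun
  rw [Fin.cons_injective_iff, Fin.cons_injective_iff]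
  refine ⟨?_, ?_, (skipTwo_injective m c).comp hσ⟩
  · rintro ⟨j, hj⟩
    have h := congrArg Fin.val hj
    cases j using Fin.cases with
    | zero => simp at h
    | succ j =>
      simp only [Fin.cons_succ, Function.comp, skipTwo_val] at h
      split_ifs at h <;> omega
  · rintro ⟨j, hj⟩
    have h := congrArg Fin.val hj
    simp only [Function.comp, skipTwo_val] at h
    split_ifs at h <;> omega

/-- The permutation of `Fin (m + 2)` with word `c + 1, c` followed by a relabelling of `σ`. -/
noncomputable def insertTwo {m c : ℕ} (hc : c ≤ m) (σ : Equiv.Perm (Fin m)) :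
    Equiv.Perm (Fin (m + 2)) :=
  Equiv.ofBijective (insertTwoFun hc σ)
    (Finite.injective_iff_bijective.mp (insertTwoFun_injective hc σ.injective))

lemma insertTwo_zero {m c : ℕ} (hc : c ≤ m) (σ : Equiv.Perm (Fin m)) (h : 0 < m + 2) :
    insertTwo hc σ ⟨0, h⟩ = ⟨c + 1, by omega⟩ := rfl

lemma insertTwo_one {m c : ℕ} (hc : c ≤ m) (σ : Equiv.Perm (Fin m)) (h : 1 < m + 2) :
    insertTwo hc σ ⟨1, h⟩ = ⟨c, by omega⟩ := rfl

lemma insertTwo_add_two {m c : ℕ} (hc : c ≤ m) (σ : Equiv.Perm (Fin m)) (j : ℕ)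
    (h : j + 2 < m + 2) :
    insertTwo hc σ ⟨j + 2, h⟩ = skipTwo m c (σ ⟨j, by omega⟩) := rfl

lemma insertTwo_injective {m c : ℕ} (hc : c ≤ m) : Function.Injective (insertTwo (m := m) hc) := by
  intro σ τ h
  ext ⟨j, hj⟩
  have := DFunLike.congr_fun h ⟨j + 2, by omega⟩
  rw [insertTwo_add_two, insertTwo_add_two] at this
  rw [skipTwo_injective m c this]

lemma exists_insertTwo {m c : ℕ} (hc : c ≤ m) (π : Equiv.Perm (Fin (m + 2)))
    (h0 : (π ⟨0, by omega⟩ : ℕ) = c + 1) (h1 : (π ⟨1, by omega⟩ : ℕ) = c) :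
    ∃ σ, insertTwo hc σ = π := by
  have key : ∀ j : Fin m, ∃ v, skipTwo m c v = π ⟨j + 2, by omega⟩ := by
    intro j
    refine exists_skipTwo hc _ (fun h => ?_) (fun h => ?_)
    · have := π.injective (Fin.ext (h.trans h1.symm))
      simp at this
    · have := π.injective (Fin.ext (h.trans h0.symm))
      simp at this
  choose s hs using key
  have hinj : Function.Injective s := by
    intro i j h
    have := π.injective ((hs i).symm.trans ((congrArg _ h).trans (hs j)))
    simp only [Fin.mk.injEq] at this
    exact Fin.ext (by omega)
  refine ⟨Equiv.ofBijective s (Finite.injective_iff_bijective.mp hinj), ?_⟩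
  ext ⟨j, hj⟩
  match j, hj with
  | 0, _ => exact h0.symm
  | 1, _ => exact h1.symm
  | j + 2, hj =>
    rw [insertTwo_add_two]
    exact congrArg Fin.val (hs ⟨j, by omega⟩)

/-- The only comparison not inherited from `σ` or `c < c + 1` is the one between the inserted `c`
and the relabelled first letter of `σ`, which amounts to `c ≤ σ 0`. -/
lemma isAltPerm_insertTwo_iff {m c : ℕ} (hm : 0 < m) (hc : c ≤ m) (σ : Equiv.Perm (Fin m)) :
    IsAltPerm (m + 2) (insertTwo hc σ) ↔ IsAltPerm m σ ∧ c ≤ (σ ⟨0, hm⟩ : ℕ) := by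
  constructor
  · intro H
    constructor
    · intro i h
      have := H (i + 2) (by omega)
      simpa only [Nat.add_mod_right, insertTwo_add_two, Nat.add_right_comm i 2 1,
        skipTwo_lt_iff] using this
    · have := H 1 (by omega)
      simp only [insertTwo_one, insertTwo_add_two hc σ 0, Fin.lt_def, skipTwo_val] at this
      norm_num at this
      split_ifs at this <;> omega
  · rintro ⟨H, h0⟩ i h
    match i, h with
    | 0, h =>
      simp only [zero_add, insertTwo_zero, insertTwo_one, Fin.lt_def]
      simp
    | 1, h =>
      simp only [insertTwo_one, insertTwo_add_two hc σ 0, Fin.lt_def, skipTwo_val]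
      norm_num
      split_ifs <;> omega
    | i + 2, h =>
      have := H i (by omega)
      simpa only [Nat.add_mod_right, insertTwo_add_two, Nat.add_right_comm i 2 1,
        skipTwo_lt_iff] using this

lemma swap_val {n c : ℕ} (h : c + 1 < n) (x : Fin n) :
    (Equiv.swap (⟨c, by omega⟩ : Fin n) ⟨c + 1, h⟩ x : ℕ) =
      if (x : ℕ) = c then c + 1 else if (x : ℕ) = c + 1 then c else x := by
  rw [Equiv.swap_apply_def]
  simp only [Fin.ext_iff]
  split_ifs <;> rfl

/-- Exchanging two consecutive values, one of which is the first entry, keeps a permutation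
alternating unless they are its first two entries. -/
lemma isAltPerm_swap_mul {n c : ℕ} (h : c + 1 < n) {π : Equiv.Perm (Fin n)} (H : IsAltPerm n π)
    (h0 : (π ⟨0, by omega⟩ : ℕ) = c ∨ (π ⟨0, by omega⟩ : ℕ) = c + 1)
    (h1 : (π ⟨0, by omega⟩ : ℕ) = c + 1 → (π ⟨1, by omega⟩ : ℕ) ≠ c) :
    IsAltPerm n (Equiv.swap ⟨c, by omega⟩ ⟨c + 1, h⟩ * π) := by
  intro i hi
  have Hi := H i hi
  have n0 : ∀ j (hj : j < n), j ≠ 0 → (π ⟨j, hj⟩ : ℕ) ≠ π ⟨0, by omega⟩ := by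
    intro j hj hj0 e
    have := π.injective (Fin.ext e)
    simp only [Fin.mk.injEq] at this
    exact hj0 this
  simp only [Equiv.Perm.mul_apply, Fin.lt_def, swap_val] at Hi ⊢
  have a1 := n0 (i + 1) hi (by omega)
  rcases Nat.eq_zero_or_pos i with rfl | hpos
  · simp only [Nat.zero_mod, if_true, zero_add] at Hi a1 ⊢
    split_ifs <;> omega
  · have a0 := n0 i (by omega) (by omega)
    split_ifs at Hi ⊢ <;> omega

lemma firstEntry_eq {n : ℕ} (h : 0 < n) (π : Equiv.Perm (Fin n)) :
    firstEntry π = (π ⟨0, h⟩ : ℕ) + 1 := by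
  simp [firstEntry, h]

/-- For `n ≥ 3` and `2 ≤ k ≤ n`, there is a bijection between `A_{n,k}` and the
disjoint union of `A_{n,k-1}` with the disjoint union over `i = k+1, …, n` of
the sets `A_{n-2,i-2}`. -/
theorem altA_equiv_recurrence (n k : ℕ) (hn : 3 ≤ n) (hk2 : 2 ≤ k) (hkn : k ≤ n) :
    Nonempty
      ({π : Equiv.Perm (Fin n) // IsAltPerm n π ∧ firstEntry π = k} ≃
        {π : Equiv.Perm (Fin n) // IsAltPerm n π ∧ firstEntry π = k - 1} ⊕
          Σ i : Finset.Icc (k + 1) n,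
            {π : Equiv.Perm (Fin (n - 2)) //
              IsAltPerm (n - 2) π ∧ firstEntry π = (i : ℕ) - 2}) := by
  obtain ⟨m, rfl⟩ : ∃ m, n = m + 2 := ⟨n - 2, by omega⟩
  obtain ⟨c, rfl⟩ : ∃ c, k = c + 2 := ⟨k - 2, by omega⟩
  have hm : 0 < m := by omega
  have hc : c ≤ m := by omega
  have hc1 : c + 1 < m + 2 := by omega
  simp only [firstEntry_eq (Nat.succ_pos (m + 1)), firstEntry_eq hm,
    show c + 2 - 1 = c + 1 from rfl]
  have down : ∀ π : Equiv.Perm (Fin (m + 2)), IsAltPerm (m + 2) π →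
      (π ⟨1, by omega⟩ : ℕ) < π ⟨0, by omega⟩ := fun π H => H 0 (by omega)
  let F : ({π : Equiv.Perm (Fin (m + 2)) //
        IsAltPerm (m + 2) π ∧ (π ⟨0, Nat.succ_pos (m + 1)⟩ : ℕ) + 1 = c + 1} ⊕
      Σ i : Finset.Icc (c + 2 + 1) (m + 2), {σ : Equiv.Perm (Fin m) //
        IsAltPerm m σ ∧ (σ ⟨0, hm⟩ : ℕ) + 1 = (i : ℕ) - 2}) →
      {π : Equiv.Perm (Fin (m + 2)) //
        IsAltPerm (m + 2) π ∧ (π ⟨0, Nat.succ_pos (m + 1)⟩ : ℕ) + 1 = c + 2} :=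
    Sum.elim
      (fun π => ⟨Equiv.swap ⟨c, by omega⟩ ⟨c + 1, hc1⟩ * π.1,
        isAltPerm_swap_mul hc1 π.2.1 (by have := π.2.2; omega) (by have := π.2.2; omega), by
          have := π.2.2
          rw [Equiv.Perm.mul_apply, swap_val, if_pos (by omega)]⟩)
      (fun σ => ⟨insertTwo hc σ.2.1, by
        have h1 := σ.2.2.2
        have h2 := Finset.mem_Icc.mp σ.1.2
        exact (isAltPerm_insertTwo_iff hm hc _).mpr ⟨σ.2.2.1, by omega⟩, rfl⟩)
  -- A swapped permutation has second entry below `c`, whereas `insertTwo` has second entry `c`.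
  have disj : ∀ a b, F (Sum.inl a) ≠ F (Sum.inr b) := by
    rintro ⟨π, H, h0⟩ ⟨i, σ, hσ⟩ e
    have e1 := congrArg Fin.val (DFunLike.congr_fun (congrArg Subtype.val e) ⟨1, by omega⟩)
    have d := down π H
    simp only [F, Sum.elim_inl, Sum.elim_inr, Equiv.Perm.mul_apply, insertTwo_one, swap_val] at e1
    split_ifs at e1 <;> omega
  refine ⟨(Equiv.ofBijective F ⟨?_, ?_⟩).symm⟩
  · rintro (a | a) (b | b) e
    · have e' := congrArg Subtype.val e
      exact congrArg Sum.inl (Subtype.ext (mul_left_cancel e'))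
    · exact (disj a b e).elim
    · exact (disj b a e.symm).elim
    · have e' := insertTwo_injective hc (congrArg Subtype.val e)
      obtain ⟨⟨i, hi⟩, σ, hσ, h⟩ := a
      obtain ⟨⟨j, hj⟩, τ, hτ, h'⟩ := b
      dsimp only at e' h h'
      subst e'
      have hi' := Finset.mem_Icc.mp hi
      have hj' := Finset.mem_Icc.mp hj
      obtain rfl : i = j := by omega
      rfl
  · rintro ⟨π, H, h0⟩
    by_cases h1 : (π ⟨1, by omega⟩ : ℕ) = c
    · obtain ⟨σ, rfl⟩ := exists_insertTwo hc π (by omega) h1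
      obtain ⟨hσ, hle⟩ := (isAltPerm_insertTwo_iff hm hc σ).mp H
      exact ⟨Sum.inr ⟨⟨(σ ⟨0, hm⟩ : ℕ) + 3, Finset.mem_Icc.mpr (by omega)⟩, σ, hσ, by simp⟩, rfl⟩
    · refine ⟨Sum.inl ⟨Equiv.swap ⟨c, by omega⟩ ⟨c + 1, hc1⟩ * π,
        isAltPerm_swap_mul hc1 H (by omega) (fun _ => h1), ?_⟩, ?_⟩
      · rw [Equiv.Perm.mul_apply, swap_val, if_neg (by omega), if_pos (by omega)]
      · exact Subtype.ext (Equiv.swap_mul_self_mul _ _ π)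
end
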